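/- arXiv:1712.03938 — 3 statements merged into one kernel-verified Lean document; each statement's English description precedes it below -/
import Mathlib

section
/- Let $A = \mathbb{Q}[y_1,\ldots,y_n]$ (positively graded, with each $y_i$ of positive degree) and let $(C, d)$ be a finite complex of finitely generated free graded $A$-modules, so $C = C_0 \otimes_{\mathbb{Q}} A$ for a finite-dimensional-in-each-degree graded vector space $C_0$, with $C_0$ inheriting the induced differential $d_0$ (the $y$-degree-zero part of $d$). If $H^*(C) \cong H^*(C_0) \otimes_{\mathbb{Q}} A$ as graded vector spaces, then $H^*(C)$ is a free $A$-module. -/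
set_option synthInstance.maxHeartbeats 1000000
set_option maxHeartbeats 1000000

open MvPolynomial

/-- `A = ℚ[y₁,…,y_n]`, positively graded with each `yᵢ` in degree `1`. -/
abbrev Ay (n : ℕ) : Type := MvPolynomial (Fin n) ℚ

/-- A finite complex of finitely generated free graded `A`-modules, presented by
homogeneous matrices: in homological degree `k` the module is free on `r k`
generators, the `i`-th generator sitting in internal degree `g k i`, and the
differential `C_k → C_{k+1}` is given by the matrix `D k`, whose entries are
homogeneous of the appropriate degrees. -/
structure GradedFreeComplex (n : ℕ) where
  r : ℤ → ℕ
  bounded : ∃ N : ℕ, ∀ k : ℤ, (N : ℤ) < |k| → r k = 0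
  g : ∀ k : ℤ, Fin (r k) → ℤ
  D : ∀ k : ℤ, Matrix (Fin (r (k + 1))) (Fin (r k)) (Ay n)
  hom : ∀ k i j, (D k i j).IsHomogeneous (g k j - g (k + 1) i).toNat
  hneg : ∀ k i j, g k j < g (k + 1) i → D k i j = 0
  dd : ∀ k, D (k + 1) * D k = 0

namespace GradedFreeComplex

variable {n : ℕ} (C : GradedFreeComplex n)

/-- The cycles of the complex at homological position `k + 1`. -/
noncomputable def cycles (k : ℤ) : Submodule (Ay n) (Fin (C.r (k + 1)) → Ay n) :=
  LinearMap.ker (C.D (k + 1)).mulVecLin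

/-- The boundaries, viewed inside the cycles at position `k + 1`. -/
noncomputable def boundaries (k : ℤ) : Submodule (Ay n) (C.cycles k) :=
  (LinearMap.range (C.D k).mulVecLin).comap (C.cycles k).subtype

/-- The homology of the complex at position `k + 1`. -/
noncomputable def Hml (k : ℤ) : Type := C.cycles k ⧸ C.boundaries k

noncomputable instance (k : ℤ) : AddCommGroup (C.Hml k) :=
  inferInstanceAs (AddCommGroup (C.cycles k ⧸ C.boundaries k))
noncomputable instance (k : ℤ) : Module (Ay n) (C.Hml k) :=
  inferInstanceAs (Module (Ay n) (C.cycles k ⧸ C.boundaries k))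
noncomputable instance (k : ℤ) : Module ℚ (C.Hml k) :=
  inferInstanceAs (Module ℚ (C.cycles k ⧸ C.boundaries k))

/-- The degree-`m` graded piece of `A` (zero for `m < 0`). -/
noncomputable def pieceA (n : ℕ) (m : ℤ) : Submodule ℚ (Ay n) :=
  if m < 0 then ⊥ else homogeneousSubmodule (Fin n) ℚ m.toNat

/-- The internal-degree-`j` graded piece of the chain module at position `k`. -/
noncomputable def piece (k j : ℤ) : Submodule ℚ (Fin (C.r k) → Ay n) :=
  Submodule.pi Set.univ fun i => pieceA n (j - C.g k i)

/-- The internal-degree-`j` graded piece of the homology at position `k + 1`. -/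
noncomputable def Hpiece (k j : ℤ) : Submodule ℚ (C.Hml k) :=
  ((C.piece (k + 1) j).comap ((C.cycles k).subtype.restrictScalars ℚ)).map
    ((C.boundaries k).mkQ.restrictScalars ℚ)

/-- The specialization of the differential at a point `ν ∈ ℚⁿ`
(for `ν = 0` this is the complex `C₀ = C ⊗_A ℚ`). -/
noncomputable def Dspec (ν : Fin n → ℚ) (k : ℤ) :
    Matrix (Fin (C.r (k + 1))) (Fin (C.r k)) ℚ :=
  (C.D k).map (eval ν)

/-- The cycles of the specialized complex at position `k + 1`. -/
noncomputable def cyclesSpec (ν : Fin n → ℚ) (k : ℤ) :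
    Submodule ℚ (Fin (C.r (k + 1)) → ℚ) :=
  LinearMap.ker (C.Dspec ν (k + 1)).mulVecLin

/-- The homology of the specialized complex at position `k + 1`. -/
noncomputable def HmlSpec (ν : Fin n → ℚ) (k : ℤ) : Type :=
  C.cyclesSpec ν k ⧸
    ((LinearMap.range (C.Dspec ν k).mulVecLin).comap (C.cyclesSpec ν k).subtype)

noncomputable instance (ν : Fin n → ℚ) (k : ℤ) : AddCommGroup (C.HmlSpec ν k) :=
  inferInstanceAs (AddCommGroup (_ ⧸ _))
noncomputable instance (ν : Fin n → ℚ) (k : ℤ) : Module ℚ (C.HmlSpec ν k) :=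
  inferInstanceAs (Module ℚ (_ ⧸ _))

/-- The internal-degree-`j` piece of the chain module of `C₀`: vectors supported on
the generators of internal degree `j`. -/
noncomputable def piece0 (k j : ℤ) : Submodule ℚ (Fin (C.r k) → ℚ) :=
  Submodule.pi Set.univ fun i => if C.g k i = j then ⊤ else ⊥

/-- The internal-degree-`j` graded piece of the homology of `C₀` at position `k+1`. -/
noncomputable def H0piece (k j : ℤ) : Submodule ℚ (C.HmlSpec 0 k) :=
  ((C.piece0 (k + 1) j).comap (C.cyclesSpec 0 k).subtype).map
    ((LinearMap.range (C.Dspec 0 k).mulVecLin).comap (C.cyclesSpec 0 k).subtype).mkQ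

end GradedFreeComplex

/-- The dimension of the degree-`m` graded piece of `A = ℚ[y₁,…,y_n]`. -/
noncomputable def dimA (n : ℕ) (m : ℤ) : ℕ :=
  Module.finrank ℚ (GradedFreeComplex.pieceA n m)

/-!
Choose homogeneous cycles of `C₀` whose classes form a basis of `H(C₀)`, and generators of `C₀`
which the differential maps to a basis of the boundaries. Together they give a homogeneous basis of
`C₀`, and replacing the boundaries by those of `C` lifts it to a homogeneous basis of `C`: the
determinant of a homogeneous matrix which is invertible at `y = 0` is a nonzero constant. The
coordinates on the lifted generators of `H(C₀)` define a graded map `Z(C) → H(C₀) ⊗ A`. Its kernel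
lies in the boundaries, because a cycle whose coordinates on `H(C₀)` vanish differs from a boundary
by a combination of the chosen generators, on which `d` is injective. Hence `H(C)` has degreewise at
most the dimension of `H(C₀) ⊗ A`, and when the dimensions agree the map is surjective with
kernel exactly the boundaries, so that it induces an isomorphism `H(C) ≅ H(C₀) ⊗ A`.
-/

section LinearAlgebra

open Module Submodule

variable {K : Type*} [DivisionRing K]

section

variable {V W ι κ : Type*} [AddCommGroup V] [Module K V] [AddCommGroup W] [Module K W]

variable (K) in
/-- A maximal linearly independent subfamily of the family `v`, given by its set of indices. -/
noncomputable def basisIndices (v : ι → V) : Set ι :=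
  (linearIndepOn_empty K v).extend (Set.empty_subset Set.univ)

theorem linearIndependent_basisIndices (v : ι → V) :
    LinearIndependent K fun i : basisIndices K v => v i :=
  (linearIndepOn_empty K v).linearIndepOn_extend _

theorem span_range_basisIndices (v : ι → V) :
    span K (Set.range fun i : basisIndices K v => v i) = span K (Set.range v) := by
  rw [← Set.image_eq_range, ← Set.image_univ]
  exact (linearIndepOn_empty K v).span_image_extend_eq_span_image _

/-- Bases of the kernel and of the image of a linear map assemble to a basis of its source. -/
noncomputable def basisSumElim (f : V →ₗ[K] W) {v : ι → V} {u : κ → V}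
    (hv : LinearIndependent K v) (hvf : span K (Set.range v) = LinearMap.ker f)
    (hu : LinearIndependent K (f ∘ u))
    (huf : span K (Set.range (f ∘ u)) = LinearMap.range f) : Basis (ι ⊕ κ) K V :=
  Basis.mk (v := Sum.elim v u)
    (hv.sum_type (hu.of_comp f) (hvf ▸ (range_ker_disjoint hu).symm)) <| by
    rw [Set.range_comp, ← map_span, LinearMap.range_eq_map] at huf
    rw [Set.Sum.elim_range, span_union, hvf, sup_comm, ← comap_map_eq, huf, comap_map_eq,
      top_sup_eq]

@[simp]
theorem coe_basisSumElim (f : V →ₗ[K] W) {v : ι → V} {u : κ → V}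
    (hv : LinearIndependent K v) (hvf : span K (Set.range v) = LinearMap.ker f)
    (hu : LinearIndependent K (f ∘ u))
    (huf : span K (Set.range (f ∘ u)) = LinearMap.range f) :
    ⇑(basisSumElim f hv hvf hu huf) = Sum.elim v u :=
  Basis.coe_mk _ _

end

theorem map_eq_and_ker_inf_le_of_finrank_le {V W F : Type*} [AddCommGroup V] [Module K V]
    [AddCommGroup W] [Module K W] [AddCommGroup F] [Module K F]
    (P : Submodule K V) [Module.Finite K P] (N : Submodule K F) [Module.Finite K N]
    (q : V →ₗ[K] W) (p : V →ₗ[K] F) (hker : P ⊓ LinearMap.ker p ≤ LinearMap.ker q)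
    (hmap : P.map p ≤ N) (hrank : finrank K N ≤ finrank K (P.map q)) :
    P.map p = N ∧ P ⊓ LinearMap.ker q ≤ LinearMap.ker p := by
  have rank_nullity_q := (q.domRestrict P).finrank_range_add_finrank_ker
  have rank_nullity_p := (p.domRestrict P).finrank_range_add_finrank_ker
  rw [LinearMap.range_domRestrict] at rank_nullity_q rank_nullity_p
  have hle : LinearMap.ker (p.domRestrict P) ≤ LinearMap.ker (q.domRestrict P) :=
    fun x hx => hker ⟨x.2, hx⟩
  have finrank_ker_le := finrank_mono hle
  have finrank_map_le := finrank_mono hmap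
  refine ⟨eq_of_le_of_finrank_eq hmap (by omega), fun x ⟨hxP, hxq⟩ => ?_⟩
  have hker_eq := eq_of_le_of_finrank_eq hle (by omega)
  exact hker_eq.ge (show (⟨x, hxP⟩ : P) ∈ LinearMap.ker (q.domRestrict P) from hxq)

theorem sum_le_finsum_finrank_mul {V ι T : Type*} [AddCommGroup V] [Module K V]
    [Module.Finite K V] [Fintype T] (N : ι → Submodule K V) (hN : {e | N e ≠ ⊥}.Finite)
    {v : T → V} (hv : LinearIndependent K v) (deg : T → ι) (hmem : ∀ t, v t ∈ N (deg t))
    (c : ι → ℕ) : ∑ t, c (deg t) ≤ ∑ᶠ e, finrank K (N e) * c e := by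
  classical
  have hdeg : ∀ t ∈ Finset.univ, deg t ∈ hN.toFinset := fun t _ => by
    rw [Set.Finite.mem_toFinset, Set.mem_ofPred_eq, Submodule.ne_bot_iff]
    exact ⟨v t, hmem t, hv.ne_zero t⟩
  have hsupp : (Function.support fun e => finrank K (N e) * c e) ⊆ hN.toFinset := fun e he => by
    rw [Set.Finite.coe_toFinset, Set.mem_ofPred_eq]
    intro hbot
    simp [hbot] at he
  rw [finsum_eq_sum_of_support_subset _ hsupp, ← Finset.sum_fiberwise_of_maps_to' hdeg]
  refine Finset.sum_le_sum fun e _ => ?_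
  let w : {t // deg t = e} → N e := fun t => ⟨v t, by simpa only [t.2] using hmem t⟩
  have hw : LinearIndependent K w :=
    .of_comp (N e).subtype (hv.comp (fun t : {t // deg t = e} => t.1) Subtype.val_injective)
  rw [Finset.sum_const, smul_eq_mul, ← Fintype.card_subtype]
  exact Nat.mul_le_mul_right _ hw.fintype_card_le_finrank

section Pi

variable {R T : Type*} [Ring R] {V : T → Type*} [∀ t, AddCommGroup (V t)] [∀ t, Module R (V t)]

/-- The product of the submodules `p t`, identified with the module `∀ t, p t`. -/
def submodulePiEquiv (p : ∀ t, Submodule R (V t)) : Submodule.pi Set.univ p ≃ₗ[R] ∀ t, p t where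
  __ := Equiv.Set.univPi fun t => (p t : Set (V t))
  map_add' _ _ := rfl
  map_smul' _ _ := rfl

instance submodulePi_finite [Finite T] (p : ∀ t, Submodule R (V t))
    [∀ t, Module.Finite R (p t)] : Module.Finite R (Submodule.pi Set.univ p) :=
  .equiv (submodulePiEquiv p).symm

theorem finrank_submodulePi [StrongRankCondition R] [Fintype T] (p : ∀ t, Submodule R (V t))
    [∀ t, Module.Free R (p t)] [∀ t, Module.Finite R (p t)] :
    finrank R (Submodule.pi Set.univ p) = ∑ t, finrank R (p t) := by
  rw [(submodulePiEquiv p).finrank_eq, finrank_pi_fintype]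

end Pi

end LinearAlgebra

section HomogeneousMatrix

variable {ι S R m n : Type*} [AddCommGroup ι] [CommRing R] [SetLike S R]

/-- The matrix `M` has entry `M i j` of degree `a j - b i`, i.e. it represents a degree-preserving
map `⨁ R(-a j) → ⨁ R(-b i)` of graded free modules over the graded ring `R = ⨁ 𝒜 d`. -/
def IsHomogeneousMatrix (𝒜 : ι → S) (b : m → ι) (a : n → ι) (M : Matrix m n R) : Prop :=
  ∀ i j, M i j ∈ 𝒜 (a j - b i)

namespace IsHomogeneousMatrix

variable [AddSubgroupClass S R] {𝒜 : ι → S} [SetLike.GradedMonoid 𝒜]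

theorem mulVec_mem [Fintype n] {b : m → ι} {a : n → ι} {M : Matrix m n R}
    (hM : IsHomogeneousMatrix 𝒜 b a M) {d : ι} {x : n → R} (hx : ∀ j, x j ∈ 𝒜 (d - a j)) (i : m) :
    M.mulVec x i ∈ 𝒜 (d - b i) :=
  sum_mem fun j _ => by simpa [add_comm] using SetLike.mul_mem_graded (hM i j) (hx j)

variable [Fintype m] [DecidableEq m] {a b : m → ι} {M : Matrix m m R}

theorem det_mem (hM : IsHomogeneousMatrix 𝒜 b a M) : M.det ∈ 𝒜 (∑ j, a j - ∑ i, b i) := by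
  rw [Matrix.det_apply]
  refine sum_mem fun σ _ => zsmul_mem ?_ _
  rw [← Equiv.sum_comp σ b, ← Finset.sum_sub_distrib]
  exact SetLike.prod_mem_graded 𝒜 _ _ fun j _ => hM (σ j) j

theorem adjugate_mem (hM : IsHomogeneousMatrix 𝒜 b a M) (i j : m) :
    M.adjugate i j ∈ 𝒜 (∑ l, a l - ∑ l, b l + (b j - a i)) := by
  have hrow : IsHomogeneousMatrix 𝒜 (Function.update b j (a i)) a
      (M.updateRow j (Pi.single i 1)) := fun k l => by
    rcases eq_or_ne k j with rfl | hk
    · rcases eq_or_ne l i with rfl | hl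
      · simpa using SetLike.GradedOne.one_mem (A := 𝒜)
      · simp [hl, zero_mem]
    · simpa [hk] using hM k l
  have hdeg : ∑ l, a l - ∑ l, Function.update b j (a i) l =
      ∑ l, a l - ∑ l, b l + (b j - a i) := by
    rw [Finset.sum_update_of_mem (Finset.mem_univ j),
      ← Finset.add_sum_erase _ b (Finset.mem_univ j), Finset.sdiff_singleton_eq_erase]
    abel
  rw [Matrix.adjugate_apply, ← hdeg]
  exact hrow.det_mem

theorem inv (hM : IsHomogeneousMatrix 𝒜 b a M)
    (hdet : Ring.inverse M.det ∈ 𝒜 (∑ i, b i - ∑ j, a j)) : IsHomogeneousMatrix 𝒜 a b M⁻¹ :=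
  fun i j => by
    rw [Matrix.inv_def, Matrix.smul_apply, smul_eq_mul]
    convert! SetLike.mul_mem_graded hdet (hM.adjugate_mem i j) using 2
    abel

end IsHomogeneousMatrix

end HomogeneousMatrix

namespace GradedFreeComplex

open Module

section PieceA

variable {n : ℕ} {m : ℤ} {x : Ay n}

theorem eq_zero_of_mem_pieceA_of_neg (hm : m < 0) (hx : x ∈ pieceA n m) : x = 0 := by
  simpa [pieceA, hm] using hx

theorem mem_pieceA_of_nonneg (hm : 0 ≤ m) : x ∈ pieceA n m ↔ x.IsHomogeneous m.toNat := by
  simp [pieceA, not_lt.mpr hm]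

theorem C_mem_pieceA_zero (c : ℚ) : C c ∈ pieceA n 0 :=
  (mem_pieceA_of_nonneg le_rfl).mpr (isHomogeneous_C _ _)

instance pieceA_gradedMonoid (n : ℕ) : SetLike.GradedMonoid (pieceA n) where
  one_mem := C_mem_pieceA_zero 1
  mul_mem i j x y hx hy := by
    rcases lt_or_ge i 0 with hi | hi
    · rw [eq_zero_of_mem_pieceA_of_neg hi hx, zero_mul]
      exact zero_mem _
    rcases lt_or_ge j 0 with hj | hj
    · rw [eq_zero_of_mem_pieceA_of_neg hj hy, mul_zero]
      exact zero_mem _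
    rw [mem_pieceA_of_nonneg (add_nonneg hi hj), Int.toNat_add hi hj]
    exact ((mem_pieceA_of_nonneg hi).mp hx).mul ((mem_pieceA_of_nonneg hj).mp hy)

theorem single_one_mem_pieceA {κ : Type*} [DecidableEq κ] (a : κ → ℤ) (i j : κ) :
    Pi.single (M := fun _ => Ay n) j 1 i ∈ pieceA n (a j - a i) := by
  rcases eq_or_ne i j with rfl | hij
  · rw [Pi.single_eq_same, sub_self]
    exact SetLike.GradedOne.one_mem
  · rw [Pi.single_eq_of_ne hij]
    exact zero_mem _

theorem eval_zero_eq_zero_of_mem_pieceA (hm : m ≠ 0) (hx : x ∈ pieceA n m) : eval 0 x = 0 := by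
  rcases lt_or_ge m 0 with hneg | hnonneg
  · rw [eq_zero_of_mem_pieceA_of_neg hneg hx, map_zero]
  · rw [MvPolynomial.eval_zero]
    refine ((mem_pieceA_of_nonneg hnonneg).mp hx).coeff_eq_zero ?_
    rw [map_zero]
    omega

theorem eq_C_eval_zero_of_mem_pieceA_zero (hx : x ∈ pieceA n 0) : x = C (eval 0 x) := by
  rw [MvPolynomial.eval_zero]
  exact totalDegree_eq_zero_iff_eq_C.mp
    ((totalDegree_zero_iff_isHomogeneous _).mpr ((mem_pieceA_of_nonneg le_rfl).mp hx))

instance pieceA_finite (n : ℕ) (m : ℤ) : Module.Finite ℚ (pieceA n m) := by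
  rw [Module.Finite.iff_fg, pieceA]
  split_ifs
  exacts [Submodule.fg_bot, homogeneousSubmodule_fg _ _ _]

end PieceA

section HomogeneousBasis

variable {n : ℕ} {κ ι : Type*} {b : κ → ℤ}

theorem isUnit_det_and_inv_isHomogeneousMatrix [Fintype κ] [DecidableEq κ]
    {a : κ → ℤ} {M : Matrix κ κ (Ay n)} (hM : IsHomogeneousMatrix (pieceA n) b a M)
    (hli : LinearIndependent ℚ (M.map (eval 0)).col) :
    IsUnit M.det ∧ IsHomogeneousMatrix (pieceA n) a b M⁻¹ := by
  have heval : eval 0 M.det ≠ 0 := by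
    rw [RingHom.map_det, RingHom.mapMatrix_apply, ← isUnit_iff_ne_zero,
      ← Matrix.isUnit_iff_isUnit_det]
    exact Matrix.linearIndependent_cols_iff_isUnit.mp hli
  have hdeg : ∑ j, a j - ∑ i, b i = 0 := by
    by_contra h
    exact heval (eval_zero_eq_zero_of_mem_pieceA h hM.det_mem)
  have hdet : M.det = C (eval 0 M.det) :=
    eq_C_eval_zero_of_mem_pieceA_zero (hdeg ▸ hM.det_mem)
  have hunit : IsUnit M.det := hdet ▸ (isUnit_iff_ne_zero.mpr heval).map C
  have hinv : Ring.inverse M.det = C (eval 0 M.det)⁻¹ := by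
    rw [← mul_one (Ring.inverse _), Ring.inverse_mul_eq_iff_eq_mul _ _ _ hunit, hdet, eval_C,
      ← C_mul, mul_inv_cancel₀ heval, C_1]
  refine ⟨hunit, hM.inv ?_⟩
  rw [hinv, ← neg_sub, hdeg, neg_zero]
  exact C_mem_pieceA_zero _

theorem exists_basis_of_isHomogeneousMatrix [Finite κ] {a : ι → ℤ} {M : Matrix κ ι (Ay n)}
    (hM : IsHomogeneousMatrix (pieceA n) b a M) (β : Basis ι ℚ (κ → ℚ))
    (hβ : ⇑β = (M.map (eval 0)).col) :
    ∃ B : Basis ι (Ay n) (κ → Ay n), ⇑B = M.col ∧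
      ∀ d x, (∀ k, x k ∈ pieceA n (d - b k)) → ∀ i, B.repr x i ∈ pieceA n (d - a i) := by
  classical
  let _ := Fintype.ofFinite κ
  let e : ι ≃ κ := β.indexEquiv (Pi.basisFun ℚ κ)
  let N : Matrix κ κ (Ay n) := M.submatrix id e.symm
  have hN : IsHomogeneousMatrix (pieceA n) b (a ∘ e.symm) N := fun i j => hM i (e.symm j)
  have hli : LinearIndependent ℚ (N.map (eval 0)).col := by
    have h := β.linearIndependent.comp e.symm e.symm.injective
    rwa [hβ] at h
  obtain ⟨hdet, hinv⟩ := isUnit_det_and_inv_isHomogeneousMatrix hN hli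
  let _ := N.invertibleOfIsUnitDet hdet
  let B := (Basis.ofEquivFun (N.toLinearEquiv' inferInstance).symm).reindex e.symm
  refine ⟨B, ?_, fun d x hx i => ?_⟩
  · ext1 i
    have hBi : B i = N.mulVec (Pi.single (e i) 1) := by
      rw [Basis.reindex_apply, Basis.coe_ofEquivFun]
      rfl
    rw [hBi, Matrix.mulVec_single_one]
    exact congrArg M.col (e.symm_apply_apply i)
  · have hrepr : B.repr x i = (⅟N).mulVec x (e i) := by
      rw [Basis.repr_reindex_apply]
      rfl
    rw [hrepr, Matrix.invOf_eq_nonsing_inv]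
    simpa using hinv.mulVec_mem hx (e i)

end HomogeneousBasis

section Differential

variable {n : ℕ} (C : GradedFreeComplex n) (ν : Fin n → ℚ) (k : ℤ)

theorem D_isHomogeneousMatrix : IsHomogeneousMatrix (pieceA n) (C.g (k + 1)) (C.g k) (C.D k) :=
  fun i j => by
    rcases lt_or_ge (C.g k j) (C.g (k + 1) i) with h | h
    · rw [C.hneg k i j h]
      exact zero_mem _
    · exact (mem_pieceA_of_nonneg (sub_nonneg.mpr h)).mpr (C.hom k i j)

theorem Dspec_zero_apply_eq_zero {i : Fin (C.r (k + 1))} {j : Fin (C.r k)}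
    (h : C.g k j ≠ C.g (k + 1) i) : C.Dspec 0 k i j = 0 :=
  eval_zero_eq_zero_of_mem_pieceA (sub_ne_zero.mpr h) (C.D_isHomogeneousMatrix k i j)

theorem Dspec_mul_Dspec : C.Dspec ν (k + 1) * C.Dspec ν k = 0 := by
  rw [Dspec, Dspec, ← Matrix.map_mul, C.dd, Matrix.map_zero _ (map_zero _)]

/-- The differential `C_k → C_{k+1}`, corestricted to the cycles. -/
noncomputable def toCycles : (Fin (C.r k) → Ay n) →ₗ[Ay n] C.cycles k :=
  (C.D k).mulVecLin.codRestrict _ fun x => by simp [cycles, C.dd]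

theorem boundaries_eq_range_toCycles : C.boundaries k = LinearMap.range (C.toCycles k) :=
  (LinearMap.range_codRestrict _ _ _).symm

@[simp]
theorem coe_toCycles (x : Fin (C.r k) → Ay n) : (C.toCycles k x).1 = (C.D k).mulVec x :=
  rfl

theorem toCycles_coe_eq_zero (x : C.cycles k) : C.toCycles (k + 1) x = 0 :=
  Subtype.ext x.2

/-- The differential of the specialized complex, corestricted to the cycles. -/
noncomputable def toCyclesSpec : (Fin (C.r k) → ℚ) →ₗ[ℚ] C.cyclesSpec ν k :=
  (C.Dspec ν k).mulVecLin.codRestrict _ fun x => by simp [cyclesSpec, Dspec_mul_Dspec]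

theorem ker_toCyclesSpec : LinearMap.ker (C.toCyclesSpec ν (k + 1)) = C.cyclesSpec ν k :=
  LinearMap.ker_codRestrict _ _ _

@[simp]
theorem coe_toCyclesSpec (x : Fin (C.r k) → ℚ) :
    (C.toCyclesSpec ν k x).1 = (C.Dspec ν k).mulVec x :=
  rfl

/-- The map sending a cycle of the specialized complex to its homology class. -/
noncomputable def classSpec : C.cyclesSpec ν k →ₗ[ℚ] C.HmlSpec ν k :=
  ((LinearMap.range (C.Dspec ν k).mulVecLin).comap (C.cyclesSpec ν k).subtype).mkQ

theorem ker_classSpec : LinearMap.ker (C.classSpec ν k) = LinearMap.range (C.toCyclesSpec ν k) :=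
  (Submodule.ker_mkQ _).trans (LinearMap.range_codRestrict _ _ _).symm

theorem range_classSpec : LinearMap.range (C.classSpec ν k) = ⊤ :=
  Submodule.range_mkQ _

instance finite_HmlSpec : Module.Finite ℚ (C.HmlSpec ν k) :=
  .of_surjective _ (LinearMap.range_eq_top.mp (C.range_classSpec ν k))

end Differential

section HomogeneousCycles

variable {n : ℕ} (C : GradedFreeComplex n) (k : ℤ)

theorem mem_piece0 {e : ℤ} {x : Fin (C.r k) → ℚ} :
    x ∈ C.piece0 k e ↔ ∀ i, C.g k i ≠ e → x i = 0 := by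
  simp only [piece0, Submodule.mem_pi, Set.mem_univ, true_imp_iff]
  refine forall_congr' fun i => ?_
  by_cases hi : C.g k i = e <;> simp [hi]

theorem Dspec_zero_mulVec_indicator (e : ℤ) (x : Fin (C.r k) → ℚ) :
    (C.Dspec 0 k).mulVec ((C.g k ⁻¹' {e}).indicator x) =
      (C.g (k + 1) ⁻¹' {e}).indicator ((C.Dspec 0 k).mulVec x) := by
  classical
  ext i
  have hterm (j : Fin (C.r k)) : C.Dspec 0 k i j * (C.g k ⁻¹' {e}).indicator x j =
      if C.g (k + 1) i = e then C.Dspec 0 k i j * x j else 0 := by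
    by_cases hij : C.g k j = C.g (k + 1) i
    · simp [Set.indicator_apply, hij]
    · simp [C.Dspec_zero_apply_eq_zero k hij]
  simp only [Matrix.mulVec, dotProduct, hterm]
  simp [Set.indicator_apply, Finset.sum_ite_irrel, Matrix.mulVec, dotProduct]

theorem iSup_comap_piece0_cyclesSpec :
    ⨆ e, (C.piece0 (k + 1) e).comap (C.cyclesSpec 0 k).subtype = ⊤ := by
  classical
  refine eq_top_iff.mpr fun x _ => ?_
  let y (e : ℤ) : C.cyclesSpec 0 k := ⟨(C.g (k + 1) ⁻¹' {e}).indicator x, by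
    have hx : (C.Dspec 0 (k + 1)).mulVec x = 0 := x.2
    simp [cyclesSpec, Dspec_zero_mulVec_indicator, hx]⟩
  have hy (e : ℤ) : (y e : Fin (C.r (k + 1)) → ℚ) ∈ C.piece0 (k + 1) e :=
    (C.mem_piece0 _).mpr fun i hi => Set.indicator_of_notMem (s := C.g (k + 1) ⁻¹' {e}) hi _
  have hx : x = ∑ e ∈ Finset.univ.image (C.g (k + 1)), y e := by
    ext i
    simp [y, Set.indicator_apply]
  rw [hx]
  exact sum_mem fun e _ => Submodule.mem_iSup_of_mem e (hy e)

/-- A cycle of `C₀` at position `k + 1` together with an internal degree in which it lies. -/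
abbrev HomogeneousCycle : Type :=
  Σ e : ℤ, (C.piece0 (k + 1) e).comap (C.cyclesSpec 0 k).subtype

theorem span_range_classSpec_homogeneousCycle :
    Submodule.span ℚ (Set.range fun z : C.HomogeneousCycle k => C.classSpec 0 k z.2) = ⊤ := by
  rw [eq_top_iff, ← range_classSpec, LinearMap.range_eq_map, ← iSup_comap_piece0_cyclesSpec,
    Submodule.map_iSup]
  exact iSup_le fun e => Submodule.map_le_iff_le_comap.mpr fun z hz =>
    Submodule.subset_span ⟨⟨e, z, hz⟩, rfl⟩

end HomogeneousCycles

section AdaptedBasis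

variable {n : ℕ} (C : GradedFreeComplex n) (k : ℤ)

/-- The pivot columns of the differential of `C₀`: indices of basis vectors of the chain module at
position `k` which the differential maps to a basis of the boundaries. -/
noncomputable def pivots : Set (Fin (C.r k)) :=
  basisIndices ℚ fun i => C.toCyclesSpec 0 k (Pi.single i 1)

theorem linearIndependent_toCyclesSpec_pivots :
    LinearIndependent ℚ fun s : C.pivots k => C.toCyclesSpec 0 k (Pi.single s 1) :=
  linearIndependent_basisIndices _

theorem span_range_toCyclesSpec_pivots :
    Submodule.span ℚ (Set.range fun s : C.pivots k => C.toCyclesSpec 0 k (Pi.single s 1)) =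
      LinearMap.range (C.toCyclesSpec 0 k) := by
  rw [pivots, span_range_basisIndices, LinearMap.range_eq_map, ← (Pi.basisFun ℚ _).span_eq,
    Submodule.map_span, ← Set.range_comp]
  simp [Function.comp_def]

/-- Homogeneous cycles of `C₀` whose classes form a basis of `H(C₀)` at position `k + 1`. -/
noncomputable def homologyGenerators : Set (C.HomogeneousCycle k) :=
  basisIndices ℚ fun z => C.classSpec 0 k z.2

theorem linearIndependent_classSpec_homologyGenerators :
    LinearIndependent ℚ fun t : C.homologyGenerators k => C.classSpec 0 k t.1.2 :=
  linearIndependent_basisIndices _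

theorem span_range_classSpec_homologyGenerators :
    Submodule.span ℚ (Set.range fun t : C.homologyGenerators k => C.classSpec 0 k t.1.2) = ⊤ := by
  rw [homologyGenerators, span_range_basisIndices, span_range_classSpec_homogeneousCycle]

noncomputable instance fintype_homologyGenerators : Fintype (C.homologyGenerators k) :=
  have := (C.linearIndependent_classSpec_homologyGenerators k).finite
  Fintype.ofFinite _

/-- A basis of the cycles of `C₀` adapted to the boundaries. -/
noncomputable def cyclesSpecBasis :
    Basis (C.pivots k ⊕ C.homologyGenerators k) ℚ (C.cyclesSpec 0 k) :=
  basisSumElim (C.classSpec 0 k) (v := fun s => C.toCyclesSpec 0 k (Pi.single s 1))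
    (u := fun t => t.1.2)
    (C.linearIndependent_toCyclesSpec_pivots k)
    ((C.span_range_toCyclesSpec_pivots k).trans (C.ker_classSpec 0 k).symm)
    (C.linearIndependent_classSpec_homologyGenerators k)
    ((C.span_range_classSpec_homologyGenerators k).trans (C.range_classSpec 0 k).symm)

/-- The index type of a basis of the chain module at position `k + 1` adapted to the filtration
`boundaries ≤ cycles ≤ chains` of `C₀`. -/
abbrev AdaptedIndex : Type := (C.pivots k ⊕ C.homologyGenerators k) ⊕ C.pivots (k + 1)

/-- A basis of the chain module of `C₀` adapted to the boundaries and the cycles. -/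
noncomputable def adaptedBasisSpec : Basis (C.AdaptedIndex k) ℚ (Fin (C.r (k + 1)) → ℚ) :=
  basisSumElim (C.toCyclesSpec 0 (k + 1)) (v := (C.cyclesSpec 0 k).subtype ∘ C.cyclesSpecBasis k)
    (u := fun p => Pi.single p 1)
    ((C.cyclesSpecBasis k).linearIndependent.map' _ (Submodule.ker_subtype _))
    (by
      rw [ker_toCyclesSpec, Set.range_comp, Submodule.span_image, Basis.span_eq,
        Submodule.map_subtype_top])
    (C.linearIndependent_toCyclesSpec_pivots (k + 1))
    (C.span_range_toCyclesSpec_pivots (k + 1))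

/-- The internal degrees of the vectors of the adapted basis. -/
def adaptedDegree : C.AdaptedIndex k → ℤ :=
  Sum.elim (Sum.elim (fun s => C.g k s) fun t => t.1.1) fun p => C.g (k + 1) p

/-- The matrix over `A` whose columns are homogeneous lifts of the adapted basis of `C₀`. -/
noncomputable def adaptedMatrix : Matrix (Fin (C.r (k + 1))) (C.AdaptedIndex k) (Ay n) :=
  .of fun i => Sum.elim
    (Sum.elim (fun s : C.pivots k => C.D k i s)
      fun t : C.homologyGenerators k => MvPolynomial.C (t.1.2.1.1 i))
    fun p : C.pivots (k + 1) => Pi.single (M := fun _ => Ay n) p.1 1 i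

theorem adaptedMatrix_isHomogeneousMatrix : IsHomogeneousMatrix (pieceA n) (C.g (k + 1))
    (C.adaptedDegree k) (C.adaptedMatrix k) := by
  rintro i ((s | ⟨⟨e, z, hz⟩, -⟩) | p)
  · exact C.D_isHomogeneousMatrix k i s
  · change MvPolynomial.C (z.1 i) ∈ pieceA n (e - C.g (k + 1) i)
    by_cases hi : C.g (k + 1) i = e
    · rw [hi, sub_self]
      exact C_mem_pieceA_zero _
    · rw [show z.1 i = 0 from (C.mem_piece0 _).mp hz i hi, map_zero]
      exact zero_mem _
  · exact single_one_mem_pieceA (C.g (k + 1)) i p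

theorem coe_adaptedBasisSpec :
    ⇑(C.adaptedBasisSpec k) = ((C.adaptedMatrix k).map (eval 0)).col := by
  rw [adaptedBasisSpec, coe_basisSumElim]
  ext ((s | t) | p) i
  · simp [cyclesSpecBasis, adaptedMatrix, Dspec]
  · simp [cyclesSpecBasis, adaptedMatrix]
  · simp [adaptedMatrix, Pi.single_apply]

theorem exists_adaptedBasis : ∃ B : Basis (C.AdaptedIndex k) (Ay n) (Fin (C.r (k + 1)) → Ay n),
    ⇑B = (C.adaptedMatrix k).col ∧
      ∀ j, ∀ x ∈ C.piece (k + 1) j, ∀ i, B.repr x i ∈ pieceA n (j - C.adaptedDegree k i) := by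
  obtain ⟨B, hB, hrepr⟩ := exists_basis_of_isHomogeneousMatrix
    (C.adaptedMatrix_isHomogeneousMatrix k) _ (C.coe_adaptedBasisSpec k)
  exact ⟨B, hB, fun j x hx => hrepr j x fun i => hx i trivial⟩

/-- The lift of `adaptedBasisSpec` to a homogeneous basis of the chain module over `A`. -/
noncomputable def adaptedBasis : Basis (C.AdaptedIndex k) (Ay n) (Fin (C.r (k + 1)) → Ay n) :=
  (C.exists_adaptedBasis k).choose

theorem coe_adaptedBasis : ⇑(C.adaptedBasis k) = (C.adaptedMatrix k).col :=
  (C.exists_adaptedBasis k).choose_spec.1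

theorem adaptedBasis_repr_mem_pieceA {j : ℤ} {x : Fin (C.r (k + 1)) → Ay n}
    (hx : x ∈ C.piece (k + 1) j) (i : C.AdaptedIndex k) :
    (C.adaptedBasis k).repr x i ∈ pieceA n (j - C.adaptedDegree k i) :=
  (C.exists_adaptedBasis k).choose_spec.2 j x hx i

theorem adaptedBasis_inl_inl (s : C.pivots k) :
    C.adaptedBasis k (.inl (.inl s)) = C.toCycles k (Pi.single s 1) := by
  rw [coe_adaptedBasis, coe_toCycles, Matrix.mulVec_single_one]
  rfl

theorem adaptedBasis_inr (p : C.pivots (k + 1)) :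
    C.adaptedBasis k (.inr p) = Pi.single (p : Fin (C.r (k + 1))) (1 : Ay n) := by
  rw [coe_adaptedBasis]
  rfl

theorem linearIndependent_toCycles_pivots :
    LinearIndependent (Ay n) fun s : C.pivots k => C.toCycles k (Pi.single s 1) := by
  refine .of_comp (C.cycles k).subtype ?_
  have hB : (C.cycles k).subtype ∘ (fun s : C.pivots k => C.toCycles k (Pi.single s 1)) =
      C.adaptedBasis k ∘ Sum.inl ∘ Sum.inl := funext fun s => (C.adaptedBasis_inl_inl k s).symm
  rw [hB]
  exact (C.adaptedBasis k).linearIndependent.comp _ (Sum.inl_injective.comp Sum.inl_injective)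

end AdaptedBasis

section HomologyProj

variable {n : ℕ} (C : GradedFreeComplex n) (k : ℤ)

/-- The coordinates of a cycle on the part of the adapted basis which lifts a basis of `H(C₀)`. -/
noncomputable def homologyProj : C.cycles k →ₗ[Ay n] C.homologyGenerators k → Ay n :=
  LinearMap.pi fun t =>
    (C.adaptedBasis k).coord (.inl (.inr t)) ∘ₗ (C.cycles k).subtype

theorem ker_homologyProj_le_boundaries : LinearMap.ker (C.homologyProj k) ≤ C.boundaries k := by
  let _ := Fintype.ofFinite (C.pivots k)
  let _ := Fintype.ofFinite (C.pivots (k + 1))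
  intro x hx
  let c := (C.adaptedBasis k).repr x
  let y := ∑ s : C.pivots k, c (.inl (.inl s)) • Pi.single (M := fun _ => Ay n) s.1 1
  let z := ∑ p : C.pivots (k + 1), c (.inr p) • Pi.single (M := fun _ => Ay n) p.1 1
  have hc (t) : (C.adaptedBasis k).repr x (.inl (.inr t)) = 0 :=
    congrFun (LinearMap.mem_ker.mp hx) t
  have hxyz : (x : Fin (C.r (k + 1)) → Ay n) = C.toCycles k y + z := by
    rw [← (C.adaptedBasis k).sum_repr x, Fintype.sum_sum_type, Fintype.sum_sum_type]
    simp [adaptedBasis_inl_inl, adaptedBasis_inr, hc, c, y, z]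
  have hz : C.toCycles (k + 1) z = 0 := by
    rw [eq_sub_of_add_eq' hxyz.symm]
    exact C.toCycles_coe_eq_zero k (x - C.toCycles k y)
  have hcp : ∀ p, c (.inr p) = 0 :=
    Fintype.linearIndependent_iff.mp (C.linearIndependent_toCycles_pivots (k + 1)) _
      (by simpa [z] using hz)
  have hz0 : z = 0 := Finset.sum_eq_zero fun p _ => by rw [hcp p, zero_smul]
  rw [boundaries_eq_range_toCycles]
  exact ⟨y, Subtype.ext (by rw [hxyz, hz0, add_zero])⟩

instance finite_piece (j : ℤ) : Module.Finite ℚ (C.piece k j) :=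
  submodulePi_finite _

/-- The internal-degree-`j` graded piece of the module of cycles. -/
noncomputable abbrev cyclesPiece (j : ℤ) : Submodule ℚ (C.cycles k) :=
  (C.piece (k + 1) j).comap ((C.cycles k).subtype.restrictScalars ℚ)

instance finite_cyclesPiece (j : ℤ) : Module.Finite ℚ (C.cyclesPiece k j) :=
  .of_injective (((C.cycles k).subtype.restrictScalars ℚ).submoduleComap (C.piece (k + 1) j))
    fun _ _ hxy => Subtype.ext (Subtype.ext (congrArg Subtype.val hxy :))

theorem toCycles_single_mem_cyclesPiece (i : Fin (C.r k)) :
    C.toCycles k (Pi.single i 1) ∈ C.cyclesPiece k (C.g k i) := by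
  rw [Submodule.mem_comap]
  change (C.toCycles k (Pi.single i 1)).1 ∈ C.piece (k + 1) (C.g k i)
  rw [coe_toCycles, Matrix.mulVec_single_one]
  exact fun l _ => C.D_isHomogeneousMatrix k l i

theorem homologyProj_mem_pieceA {j : ℤ} {x : C.cycles k} (hx : x ∈ C.cyclesPiece k j)
    (t : C.homologyGenerators k) : C.homologyProj k x t ∈ pieceA n (j - t.1.1) :=
  C.adaptedBasis_repr_mem_pieceA k hx (.inl (.inr t))

theorem finite_setOf_H0piece_ne_bot : {e | C.H0piece k e ≠ ⊥}.Finite := by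
  refine (Set.finite_range (C.g (k + 1))).subset fun e he => ?_
  by_contra hrange
  refine he (LinearMap.le_ker_iff_map.mp fun x hx => ?_)
  have hx0 : x = 0 := Subtype.ext <| funext fun i =>
    (C.mem_piece0 (k + 1)).mp hx i fun hi => hrange ⟨i, hi⟩
  exact hx0 ▸ zero_mem _

theorem sum_dimA_le (j : ℤ) : ∑ t : C.homologyGenerators k, dimA n (j - t.1.1) ≤
    ∑ᶠ e : ℤ, finrank ℚ (C.H0piece k e) * dimA n (j - e) :=
  sum_le_finsum_finrank_mul (C.H0piece k) (C.finite_setOf_H0piece_ne_bot k)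
    (C.linearIndependent_classSpec_homologyGenerators k) (fun t => t.1.1)
    (fun t => Submodule.mem_map_of_mem t.1.2.2) fun e => dimA n (j - e)

section

variable {C k}

theorem map_homologyProj_eq_and_eq_zero_of_finrank_le {j : ℤ}
    (h : ∑ᶠ e : ℤ, finrank ℚ (C.H0piece k e) * dimA n (j - e) ≤ finrank ℚ (C.Hpiece k j)) :
    (C.cyclesPiece k j).map ((C.homologyProj k).restrictScalars ℚ) =
        Submodule.pi Set.univ (fun t : C.homologyGenerators k => pieceA n (j - t.1.1)) ∧
      ∀ x ∈ C.cyclesPiece k j, x ∈ C.boundaries k → C.homologyProj k x = 0 := by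
  obtain ⟨hmap, hker⟩ := map_eq_and_ker_inf_le_of_finrank_le (C.cyclesPiece k j)
    (Submodule.pi Set.univ fun t : C.homologyGenerators k => pieceA n (j - t.1.1))
    ((C.boundaries k).mkQ.restrictScalars ℚ) ((C.homologyProj k).restrictScalars ℚ)
    (fun x hx => (Submodule.Quotient.mk_eq_zero _).mpr (C.ker_homologyProj_le_boundaries k hx.2))
    (Submodule.map_le_iff_le_comap.mpr fun x hx t _ => C.homologyProj_mem_pieceA k hx t)
    (by rw [finrank_submodulePi]; exact (C.sum_dimA_le k j).trans h)
  exact ⟨hmap, fun x hxj hx => hker ⟨hxj, (Submodule.Quotient.mk_eq_zero _).mpr hx⟩⟩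

theorem range_homologyProj
    (h : ∀ j, ∑ᶠ e : ℤ, finrank ℚ (C.H0piece k e) * dimA n (j - e) ≤ finrank ℚ (C.Hpiece k j)) :
    LinearMap.range (C.homologyProj k) = ⊤ := by
  classical
  rw [eq_top_iff, ← (Pi.basisFun (Ay n) (C.homologyGenerators k)).span_eq, Submodule.span_le]
  rintro _ ⟨t, rfl⟩
  have hmem : (Pi.single t 1 : C.homologyGenerators k → Ay n) ∈
      Submodule.pi Set.univ fun s : C.homologyGenerators k => pieceA n (t.1.1 - s.1.1) :=
    fun s _ => single_one_mem_pieceA (fun t : C.homologyGenerators k => t.1.1) s t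
  obtain ⟨x, -, hx⟩ := (map_homologyProj_eq_and_eq_zero_of_finrank_le (h t.1.1)).1.ge hmem
  exact ⟨x, hx.trans (Pi.basisFun_apply _ _ _).symm⟩

theorem ker_homologyProj
    (h : ∀ j, ∑ᶠ e : ℤ, finrank ℚ (C.H0piece k e) * dimA n (j - e) ≤ finrank ℚ (C.Hpiece k j)) :
    LinearMap.ker (C.homologyProj k) = C.boundaries k := by
  refine le_antisymm (C.ker_homologyProj_le_boundaries k) ?_
  rw [boundaries_eq_range_toCycles, LinearMap.range_le_ker_iff]
  refine (Pi.basisFun (Ay n) _).ext fun i => ?_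
  rw [Pi.basisFun_apply]
  exact (map_homologyProj_eq_and_eq_zero_of_finrank_le (h (C.g k i))).2 _
    (C.toCycles_single_mem_cyclesPiece k i)
    (C.boundaries_eq_range_toCycles k ▸ LinearMap.mem_range_self _ _)

end

end HomologyProj

end GradedFreeComplex

theorem free_of_graded_iso_tensor_general (n : ℕ) (C : GradedFreeComplex n) (k : ℤ)
    (h : ∀ j : ℤ, ∑ᶠ e : ℤ, Module.finrank ℚ (C.H0piece k e) * dimA n (j - e) ≤
      Module.finrank ℚ (C.Hpiece k j)) : Module.Free (Ay n) (C.Hml k) :=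
  .of_equiv <| LinearEquiv.symm <|
    Submodule.quotEquivOfEq _ _ (GradedFreeComplex.ker_homologyProj h).symm ≪≫ₗ
      (C.homologyProj k).quotKerEquivOfSurjective
        (LinearMap.range_eq_top.mp (GradedFreeComplex.range_homologyProj h))

/-- Let `C` be a finite complex of finitely generated free graded modules over
`A = ℚ[y₁,…,y_n]`.  If `H^*(C) ≅ H^*(C₀) ⊗ A` as graded vector spaces — i.e. the
dimensions of the graded pieces of the homology of `C` agree with those of
`H^*(C₀) ⊗ A` — then `H^*(C)` is a free `A`-module. -/
theorem free_of_graded_iso_tensor (n : ℕ) (C : GradedFreeComplex n)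
    (hyp : ∀ k j : ℤ, Module.finrank ℚ (C.Hpiece k j) =
      ∑ᶠ e : ℤ, Module.finrank ℚ (C.H0piece k e) * dimA n (j - e)) :
    ∀ k : ℤ, Module.Free (Ay n) (C.Hml k) :=
  fun k => free_of_graded_iso_tensor_general n C k fun j => (hyp k j).ge
end

section
/- In $\mathbb{C}[x_1,\ldots,x_n,y_1,\ldots,y_n] \otimes \Lambda[\theta_1,\ldots,\theta_n]$, let $\mathcal{J}_n$ be the ideal generated by all polynomials that are antisymmetric under the diagonal $S_n$-action (permuting $x$'s, $y$'s, and $\theta$'s simultaneously). Then $\mathcal{J}_n \subseteq (x_i - x_j,\ y_i - y_j,\ \theta_i - \theta_j)$ for every pair $i \neq j$. -/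
open MvPolynomial

/-- The polynomial part `ℂ[x₁,…,x_n,y₁,…,y_n]`: `X (inl i) = xᵢ`, `X (inr i) = yᵢ`. -/
abbrev PP (n : ℕ) : Type := MvPolynomial (Fin n ⊕ Fin n) ℂ

/-- The super-polynomial ring `ℂ[x,y] ⊗ Λ[θ₁,…,θ_n]`. -/
abbrev SP (n : ℕ) : Type := TensorProduct ℂ (PP n) (ExteriorAlgebra ℂ (Fin n → ℂ))

noncomputable def xv {n : ℕ} (i : Fin n) : SP n := TensorProduct.tmul ℂ (X (Sum.inl i)) 1
noncomputable def yv {n : ℕ} (i : Fin n) : SP n := TensorProduct.tmul ℂ (X (Sum.inr i)) 1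
noncomputable def θv {n : ℕ} (i : Fin n) : SP n :=
  TensorProduct.tmul ℂ 1 (ExteriorAlgebra.ι ℂ (Pi.single i (1 : ℂ)))

/-- The diagonal action of a permutation `σ ∈ S_n` on the super-polynomial ring,
permuting the `x`'s, `y`'s and `θ`'s simultaneously. -/
noncomputable def diagAct {n : ℕ} (σ : Equiv.Perm (Fin n)) : SP n →ₐ[ℂ] SP n :=
  Algebra.TensorProduct.map
    (rename (Sum.map σ σ))
    (ExteriorAlgebra.map (LinearMap.funLeft ℂ ℂ ⇑σ⁻¹))

/-- `g` is antisymmetric for the diagonal `S_n`-action: `σ(g) = sgn(σ) g` for all `σ`. -/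
def IsAntisym {n : ℕ} (g : SP n) : Prop :=
  ∀ σ : Equiv.Perm (Fin n), diagAct σ g = ((Equiv.Perm.sign σ : ℤ) : ℂ) • g

/-!
Let `I = (xᵢ - xⱼ, yᵢ - yⱼ, θᵢ - θⱼ)`. Each generator `s` of this left ideal satisfies `s a = a' s`
for some `a'` depending on `a`: the first two are central, and moving `θᵢ - θⱼ` past `a` applies the
grade involution. Hence `I` is two-sided. The transposition `(i j)` fixes every variable modulo `I`,
so it acts trivially on the quotient algebra by `I`. If moreover `(i j) g = -g`, then
`2 g = g - (i j) g ∈ I`.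
-/

section

open Algebra.TensorProduct ExteriorAlgebra
open scoped TensorProduct

theorem isTwoSided_span_of_mul_eq_mul {A : Type*} [Semiring A] {S : Set A}
    (hS : ∀ s ∈ S, ∀ a, ∃ b, s * a = b * s) : (Ideal.span S).IsTwoSided where
  mul_mem_of_left {x} a hx := by
    induction hx using Submodule.span_induction with
    | mem s hs =>
      obtain ⟨b, hb⟩ := hS s hs a
      exact hb ▸ Ideal.mul_mem_left _ b (Ideal.subset_span hs)
    | zero => simp
    | add x y _ _ hx hy => exact add_mul x y a ▸ add_mem hx hy
    | smul c x _ hx => exact (mul_assoc c x a).symm ▸ Ideal.mul_mem_left _ c hx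

theorem mem_of_sub_mem_of_eq_neg {R M : Type*} [Ring R] [Invertible (2 : R)] [AddCommGroup M]
    [Module R M] {N : Submodule R M} {a b : M} (hsub : a - b ∈ N) (hneg : b = -a) : a ∈ N := by
  rw [hneg, sub_neg_eq_add, ← two_smul R a] at hsub
  exact (N.smul_mem_iff_of_isUnit (isUnit_of_invertible 2)).1 hsub

theorem sub_apply_swap_mem {ι M S : Type*} [DecidableEq ι] [AddGroup M] [SetLike S M]
    [AddSubgroupClass S M] {N : S} {f : ι → M} {i j : ι} (h : f i - f j ∈ N) (k : ι) :
    f k - f (Equiv.swap i j k) ∈ N := by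
  rcases eq_or_ne k i with rfl | hi
  · simpa using h
  rcases eq_or_ne k j with rfl | hj
  · simpa using neg_mem h
  · simp [Equiv.swap_apply_of_ne_of_ne hi hj]

theorem sub_comp_swap {ι R : Type*} [DecidableEq ι] [Ring R] (i j : ι) (v : ι → R) :
    v - v ∘ Equiv.swap i j = (v i - v j) • (Pi.single i 1 - Pi.single j 1) := by
  ext k
  rcases eq_or_ne k i with rfl | hi
  · rcases eq_or_ne k j with rfl | hj <;> simp [*]
  rcases eq_or_ne k j with rfl | hj
  · simp [hi]
  · simp [Equiv.swap_apply_of_ne_of_ne hi hj, hi, hj]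

theorem commute_tmul_one {R A B : Type*} [CommSemiring R] [CommSemiring A] [Algebra R A]
    [Semiring B] [Algebra R B] (a : A) (t : A ⊗[R] B) : Commute (a ⊗ₜ 1) t :=
  Algebra.commutes a t

variable {R : Type*} [CommRing R]

section ExteriorAlgebra

variable {M : Type*} [AddCommGroup M] [Module R M]

theorem ι_mul_eq_involute_mul_ι (v : M) (a : ExteriorAlgebra R M) :
    ι R v * a = CliffordAlgebra.involute a * ι R v := by
  induction a using ExteriorAlgebra.induction with
  | algebraMap r => simpa using (Algebra.commutes r (ι R v)).symm
  | ι w =>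
    rw [CliffordAlgebra.involute_ι, neg_mul]
    exact eq_neg_of_add_eq_zero_left (ι_add_mul_swap v w)
  | mul a b ha hb => rw [map_mul, ← mul_assoc, ha, mul_assoc, hb, mul_assoc]
  | add a b ha hb => rw [map_add, mul_add, add_mul, ha, hb]

theorem one_tmul_ι_mul {A : Type*} [Semiring A] [Algebra R A] (v : M)
    (t : A ⊗[R] ExteriorAlgebra R M) :
    (1 ⊗ₜ ι R v) * t = map (.id R A) CliffordAlgebra.involute t * (1 ⊗ₜ ι R v) := by
  induction t with
  | zero => simp
  | tmul a ω => simp [ι_mul_eq_involute_mul_ι]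
  | add s t hs ht => rw [map_add, mul_add, add_mul, hs, ht]

end ExteriorAlgebra

theorem algHom_sub_mem_of_generators {σ M A : Type*} [AddCommGroup M] [Module R M]
    [Ring A] [Algebra R A] {I : Ideal A} [I.IsTwoSided]
    {φ ψ : MvPolynomial σ R ⊗[R] ExteriorAlgebra R M →ₐ[R] A}
    (hX : ∀ k, φ (X k ⊗ₜ 1) - ψ (X k ⊗ₜ 1) ∈ I)
    (hι : ∀ v, φ (1 ⊗ₜ ι R v) - ψ (1 ⊗ₜ ι R v) ∈ I)
    (g : MvPolynomial σ R ⊗[R] ExteriorAlgebra R M) : φ g - ψ g ∈ I := by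
  suffices h : (Ideal.Quotient.mkₐ R I).comp φ = (Ideal.Quotient.mkₐ R I).comp ψ from
    Ideal.Quotient.eq.1 (AlgHom.congr_fun h g)
  refine Algebra.TensorProduct.ext (MvPolynomial.algHom_ext fun k ↦ ?_)
    (ExteriorAlgebra.hom_ext (LinearMap.ext fun v ↦ ?_))
  · exact Ideal.Quotient.eq.2 (hX k)
  · exact Ideal.Quotient.eq.2 (hι v)

/-- The super-polynomial ring `R[x, y] ⊗ Λ[θ]` on variables `xᵢ, yᵢ, θᵢ` indexed by an arbitrary
type; `SP n` is `SuperPolynomial ℂ (Fin n)`. -/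
abbrev SuperPolynomial (R κ : Type*) [CommRing R] : Type _ :=
  MvPolynomial (κ ⊕ κ) R ⊗[R] ExteriorAlgebra R (κ → R)

namespace SuperPolynomial

variable {κ : Type*}

variable (R) in
/-- The diagonal action of permutations on super-polynomials, extending `diagAct`. The exterior
factor uses `v ↦ v ∘ σ⁻¹`, which sends the basis vector `eᵢ` to `e_{σ i}`. -/
noncomputable def permAlgHom (σ : Equiv.Perm κ) : SuperPolynomial R κ →ₐ[R] SuperPolynomial R κ :=
  map (rename (Sum.map σ σ)) (ExteriorAlgebra.map (LinearMap.funLeft R R ⇑σ⁻¹))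

theorem permAlgHom_X_tmul_one (σ : Equiv.Perm κ) (k : κ ⊕ κ) :
    permAlgHom R σ (X k ⊗ₜ 1) = X (k.map σ σ) ⊗ₜ 1 := by
  simp [permAlgHom]

theorem permAlgHom_one_tmul_ι (σ : Equiv.Perm κ) (v : κ → R) :
    permAlgHom R σ (1 ⊗ₜ ι R v) = 1 ⊗ₜ ι R (v ∘ ⇑σ⁻¹) := by
  rw [permAlgHom, map_tmul, map_one, map_apply_ι]
  rfl

variable [DecidableEq κ]

variable (R) in
/-- The left ideal `(xᵢ - xⱼ, yᵢ - yⱼ, θᵢ - θⱼ)` of the diagonal at `i` and `j`. -/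
noncomputable def diagonalIdeal (i j : κ) : Ideal (SuperPolynomial R κ) :=
  Ideal.span {X (Sum.inl i) ⊗ₜ 1 - X (Sum.inl j) ⊗ₜ 1, X (Sum.inr i) ⊗ₜ 1 - X (Sum.inr j) ⊗ₜ 1,
    1 ⊗ₜ ι R (Pi.single i 1) - 1 ⊗ₜ ι R (Pi.single j 1)}

instance isTwoSided_diagonalIdeal (i j : κ) : (diagonalIdeal R i j).IsTwoSided := by
  refine isTwoSided_span_of_mul_eq_mul fun s hs t ↦ ?_
  rcases hs with rfl | rfl | hs
  · exact ⟨t, (commute_tmul_one _ t).sub_left (commute_tmul_one _ t)⟩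
  · exact ⟨t, (commute_tmul_one _ t).sub_left (commute_tmul_one _ t)⟩
  · rw [Set.mem_singleton_iff.1 hs, ← TensorProduct.tmul_sub, ← map_sub]
    exact ⟨_, one_tmul_ι_mul _ t⟩

theorem X_tmul_sub_swap_mem (i j : κ) (k : κ ⊕ κ) :
    X k ⊗ₜ 1 - X (k.map (Equiv.swap i j) (Equiv.swap i j)) ⊗ₜ 1 ∈ diagonalIdeal R i j := by
  rcases k with k | k
  · exact sub_apply_swap_mem (f := fun k ↦ X (Sum.inl k) ⊗ₜ 1) (Ideal.subset_span (.inl rfl)) k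
  · exact sub_apply_swap_mem (f := fun k ↦ X (Sum.inr k) ⊗ₜ 1)
      (Ideal.subset_span (.inr (.inl rfl))) k

theorem one_tmul_ι_sub_comp_swap_mem (i j : κ) (v : κ → R) :
    1 ⊗ₜ ι R v - 1 ⊗ₜ ι R (v ∘ Equiv.swap i j) ∈ diagonalIdeal R i j := by
  rw [← TensorProduct.tmul_sub, ← map_sub, sub_comp_swap, map_smul, TensorProduct.tmul_smul,
    map_sub, TensorProduct.tmul_sub]
  exact Submodule.smul_of_tower_mem _ _ (Ideal.subset_span (.inr (.inr rfl)))

theorem sub_permAlgHom_swap_mem (i j : κ) (g : SuperPolynomial R κ) :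
    g - permAlgHom R (Equiv.swap i j) g ∈ diagonalIdeal R i j := by
  refine algHom_sub_mem_of_generators (φ := .id R _) (fun k ↦ ?_) (fun v ↦ ?_) g
  · simpa [permAlgHom_X_tmul_one] using X_tmul_sub_swap_mem i j k
  · simpa [permAlgHom_one_tmul_ι] using one_tmul_ι_sub_comp_swap_mem i j v

end SuperPolynomial

open SuperPolynomial in
theorem antisym_ideal_le_general [Invertible (2 : R)] {κ : Type*} [DecidableEq κ] (i j : κ) :
    Ideal.span {g : SuperPolynomial R κ | permAlgHom R (Equiv.swap i j) g = -g} ≤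
      diagonalIdeal R i j :=
  Ideal.span_le.2 fun g hg ↦ mem_of_sub_mem_of_eq_neg
    (N := (diagonalIdeal R i j).restrictScalars R) (sub_permAlgHom_swap_mem i j g) hg

end

theorem IsAntisym.diagAct_swap {n : ℕ} {g : SP n} (hg : IsAntisym g) {i j : Fin n} (hij : i ≠ j) :
    diagAct (Equiv.swap i j) g = -g := by
  rw [hg, Equiv.Perm.sign_swap hij]
  push_cast
  exact neg_one_smul ℂ g

/-- The ideal `𝒥_n` generated by the diagonal antisymmetric elements is contained in
`(xᵢ - x_j, yᵢ - y_j, θᵢ - θ_j)` for every pair `i ≠ j`. -/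
theorem antisym_ideal_le (n : ℕ) (i j : Fin n) (hij : i ≠ j) :
    Submodule.span (SP n) {g : SP n | IsAntisym g} ≤
      Submodule.span (SP n) {xv i - xv j, yv i - yv j, θv i - θv j} :=
  (Ideal.span_mono fun _ hg ↦ IsAntisym.diagAct_swap hg hij).trans
    (antisym_ideal_le_general i j)
end

section
/- Let $\mathcal{J}_n \subset B = \mathbb{C}[\mathbf{x},\mathbf{y}] \otimes \Lambda[\boldsymbol{\theta}]$ be the ideal generated by diagonal-$S_n$-antisymmetric elements, and $J_n \subset \mathbb{C}[\mathbf{x},\mathbf{y}]$ its even degree-zero-in-$\theta$ analogue. Then for all $k \geq 1$, $\mathcal{J}_n^k = \mathcal{J}_n \cdot J_n^{k-1}$. -/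
open MvPolynomial

/-- Antisymmetry of an ordinary polynomial for the diagonal `S_n`-action. -/
def IsAntisymP {n : ℕ} (p : PP n) : Prop :=
  ∀ σ : Equiv.Perm (Fin n),
    rename (Sum.map σ σ) p = ((Equiv.Perm.sign σ : ℤ) : ℂ) • p

/-- The super ideal `𝒥_n ⊆ B` generated by diagonal antisymmetric elements,
viewed as a `ℂ`-submodule of `B`. -/
noncomputable def superJ (n : ℕ) : Submodule ℂ (SP n) :=
  (Submodule.span (SP n) {g : SP n | IsAntisym g}).restrictScalars ℂ

/-- The ideal of `B` generated by the antisymmetric ordinary polynomials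
(the image of `J_n ⊆ ℂ[x,y]` in `B`), viewed as a `ℂ`-submodule of `B`. -/
noncomputable def evenJ (n : ℕ) : Submodule ℂ (SP n) :=
  (Submodule.span (SP n)
    {g : SP n | ∃ p : PP n, IsAntisymP p ∧
      g = Algebra.TensorProduct.includeLeft (S := ℂ) p}).restrictScalars ℂ

/-!
Write `𝒥` and `J` for the two ideals of `B` and `Θ = θ₁ ⋯ θ_n`. Since `J ⊆ 𝒥`, all powers are
settled by `𝒥 * 𝒥 ⊆ 𝒥 * J`. The polarized odd derivatives `D_p = ∑ᵢ p(xᵢ, yᵢ) ∂/∂θᵢ` commute with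
the diagonal action, so by the Leibniz rule they preserve `𝒥`, `J` and `𝒥 * J`.

Every left ideal `N` that contains `Θ` and is stable under all `D_p` contains every antisymmetric
element: `B` is spanned by the words in the one-site operators `p(xᵢ, yᵢ)` and `p(xᵢ, yᵢ) ∂/∂θᵢ`
applied to `Θ`, and the signed symmetrization of such a word lies in `N` by induction on the number
of sites it involves. Indeed, summing its outermost operator over all sites keeps it in `N`; the
sites already present give shorter words, and all the other sites give the same symmetrization.

This applies to the ideal of all `f` with `f * g ∈ 𝒥 * J` for every antisymmetric `g`. It contains
`Θ`, because `Θ * g = Θ * g₀` where `g₀` is the part of `g` free of `θ`, and it is stable under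
`D_p` because `D_p f * g = D_p (f * g) - α f * D_p g`, where `α` is the parity involution.
-/

open scoped TensorProduct

section Symmetrization

variable {K ι γ V : Type*} [Field K] [AddCommGroup V] [Module K V]

/-- The span of all words in the operators `op c i` at sites `i ∈ U`, applied to `v₀`; encoded as
the least subspace containing `v₀` and stable under these operators. -/
def wordSpan (op : γ → ι → Module.End K V) (v₀ : V) (U : Set ι) : Submodule K V :=
  sInf {T | v₀ ∈ T ∧ ∀ c, ∀ i ∈ U, T ≤ T.comap (op c i)}

section wordSpan

variable {op : γ → ι → Module.End K V} {v₀ x : V} {U : Set ι}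

theorem wordSpan_le {T : Submodule K V} (base : v₀ ∈ T)
    (step : ∀ c, ∀ i ∈ U, ∀ x ∈ T, op c i x ∈ T) : wordSpan op v₀ U ≤ T :=
  sInf_le ⟨base, step⟩

theorem base_mem_wordSpan : v₀ ∈ wordSpan op v₀ U :=
  Submodule.mem_sInf.2 fun _ hT => hT.1

theorem op_mem_wordSpan (c : γ) {i : ι} (hi : i ∈ U) (hx : x ∈ wordSpan op v₀ U) :
    op c i x ∈ wordSpan op v₀ U :=
  Submodule.mem_sInf.2 fun T hT => hT.2 c i hi (Submodule.mem_sInf.1 hx T hT)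

theorem wordSpan_insert_le (l : ι) (op_one : ∃ c, op c l = 1)
    (op_mul : ∀ c d, ∃ e, op c l * op d l = op e l)
    (op_comm : ∀ c d i, i ≠ l →
      op c i * op d l = op d l * op c i ∨ op c i * op d l = -(op d l * op c i)) :
    wordSpan op v₀ (insert l U) ≤ ⨆ c, (wordSpan op v₀ U).map (op c l) := by
  have op_mem (c : γ) (x : V) (hx : x ∈ wordSpan op v₀ U) :
      op c l x ∈ ⨆ c, (wordSpan op v₀ U).map (op c l) :=
    Submodule.mem_iSup_of_mem c (Submodule.mem_map_of_mem hx)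
  refine wordSpan_le ?_ fun c i hi x hx => ?_
  · obtain ⟨c, hc⟩ := op_one
    simpa only [hc, Module.End.one_apply] using op_mem c _ base_mem_wordSpan
  suffices (⨆ d, (wordSpan op v₀ U).map (op d l)) ≤
      (⨆ d, (wordSpan op v₀ U).map (op d l)).comap (op c i) from this hx
  refine iSup_le fun d => Submodule.map_le_iff_le_comap.2 fun x hx => ?_
  rw [Submodule.mem_comap, Submodule.mem_comap, ← Module.End.mul_apply]
  by_cases hil : i = l
  · subst i
    obtain ⟨e, he⟩ := op_mul c d
    exact he ▸ op_mem e _ hx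
  · have swapped_mem := op_mem d _ (op_mem_wordSpan c (hi.resolve_left hil) hx)
    rcases op_comm c d i hil with h | h
    · exact h ▸ swapped_mem
    · exact h ▸ neg_mem swapped_mem

theorem apply_eq_self_of_mem_wordSpan {ρ : Representation K (Equiv.Perm ι) V}
    (equivariant : ∀ σ c i x, ρ σ (op c i x) = op c (σ i) (ρ σ x)) (hv₀ : v₀ ∈ ρ.invariants)
    {σ : Equiv.Perm ι} (hσ : ∀ i ∈ U, σ i = i) (hx : x ∈ wordSpan op v₀ U) : ρ σ x = x := by
  suffices wordSpan op v₀ U ≤ LinearMap.eqLocus (ρ σ) LinearMap.id from this hx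
  refine wordSpan_le (hv₀ σ) fun c i hi x hx => ?_
  rw [LinearMap.mem_eqLocus, LinearMap.id_apply] at hx ⊢
  rw [equivariant, hσ i hi, hx]

end wordSpan

variable [Fintype ι] {op : γ → ι → Module.End K V} {v₀ : V}

section norm

variable [DecidableEq ι] {ρ : Representation K (Equiv.Perm ι) V}

theorem norm_sum_op (equivariant : ∀ σ c i x, ρ σ (op c i x) = op c (σ i) (ρ σ x)) (c : γ) (x : V) :
    ρ.norm (∑ i, op c i x) = ∑ i, op c i (ρ.norm x) := by
  simp only [Representation.norm, LinearMap.sum_apply, map_sum, equivariant]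
  rw [Finset.sum_comm]
  conv_rhs => rw [Finset.sum_comm]
  exact Finset.sum_congr rfl fun σ _ => Equiv.sum_comp σ fun i => op c i (ρ σ x)

theorem norm_op_eq_norm_op (equivariant : ∀ σ c i x, ρ σ (op c i x) = op c (σ i) (ρ σ x))
    (hv₀ : v₀ ∈ ρ.invariants) {U : Set ι} {x : V} (hx : x ∈ wordSpan op v₀ U) (c : γ) {i j : ι}
    (hi : i ∉ U) (hj : j ∉ U) : ρ.norm (op c i x) = ρ.norm (op c j x) := by
  have swap_fixes : ∀ m ∈ U, Equiv.swap j i m = m := fun m hm =>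
    Equiv.swap_apply_of_ne_of_ne (fun h => hj (h ▸ hm)) (fun h => hi (h ▸ hm))
  rw [← ρ.norm_self_apply (Equiv.swap j i) (op c j x), equivariant, Equiv.swap_apply_left,
    apply_eq_self_of_mem_wordSpan equivariant hv₀ swap_fixes hx]

theorem wordSpan_le_comap_norm [CharZero K] (op_one : ∃ c, ∀ i, op c i = 1)
    (op_mul : ∀ c d, ∃ e, ∀ i, op c i * op d i = op e i)
    (op_comm : ∀ c d i j, i ≠ j →
      op c i * op d j = op d j * op c i ∨ op c i * op d j = -(op d j * op c i))
    (equivariant : ∀ σ c i x, ρ σ (op c i x) = op c (σ i) (ρ σ x)) (hv₀ : v₀ ∈ ρ.invariants)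
    {N : Submodule K V} (base : v₀ ∈ N) (step : ∀ c, ∀ x ∈ N, ∑ i, op c i x ∈ N)
    (U : Finset ι) : wordSpan op v₀ U ≤ N.comap ρ.norm := by
  induction U using Finset.induction_on with
  | empty =>
    refine wordSpan_le ?_ (by simp)
    rw [Submodule.mem_comap, Representation.norm, LinearMap.sum_apply]
    exact sum_mem fun σ _ => (hv₀ σ).symm ▸ base
  | insert l U hl ih =>
    rw [Finset.coe_insert]
    refine (wordSpan_insert_le l (op_one.imp fun _ h => h l)
      (fun c d => (op_mul c d).imp fun _ h => h l) fun c d i => op_comm c d i l).trans ?_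
    refine iSup_le fun c => Submodule.map_le_iff_le_comap.2 fun x hx => ?_
    have total_mem : ρ.norm (∑ i, op c i x) ∈ N := by
      rw [norm_sum_op equivariant]
      exact step c _ (ih hx)
    have sum_inside_mem : ∑ i ∈ U, ρ.norm (op c i x) ∈ N :=
      sum_mem fun i hi => ih (op_mem_wordSpan c hi hx)
    have sum_outside : ∑ i ∈ Uᶜ, ρ.norm (op c i x) = (Uᶜ.card : K) • ρ.norm (op c l x) := by
      rw [Nat.cast_smul_eq_nsmul]
      exact Finset.sum_eq_card_nsmul fun i hi =>
        norm_op_eq_norm_op equivariant hv₀ hx c (by simpa using hi) (by simpa using hl)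
    rw [map_sum, ← Finset.sum_add_sum_compl U, N.add_mem_iff_right sum_inside_mem,
      sum_outside] at total_mem
    have card_ne_zero : (Uᶜ.card : K) ≠ 0 :=
      Nat.cast_ne_zero.2 (Finset.card_ne_zero_of_mem (Finset.mem_compl.2 hl))
    exact (N.smul_mem_iff card_ne_zero).1 total_mem

end norm

theorem mem_of_mem_invariants_of_mem_wordSpan [CharZero K]
    {ρ : Representation K (Equiv.Perm ι) V} (op_one : ∃ c, ∀ i, op c i = 1)
    (op_mul : ∀ c d, ∃ e, ∀ i, op c i * op d i = op e i)
    (op_comm : ∀ c d i j, i ≠ j →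
      op c i * op d j = op d j * op c i ∨ op c i * op d j = -(op d j * op c i))
    (equivariant : ∀ σ c i x, ρ σ (op c i x) = op c (σ i) (ρ σ x)) (hv₀ : v₀ ∈ ρ.invariants)
    {N : Submodule K V} (base : v₀ ∈ N) (step : ∀ c, ∀ x ∈ N, ∑ i, op c i x ∈ N) {v : V}
    (hv : v ∈ ρ.invariants) (hv_span : v ∈ wordSpan op v₀ Set.univ) : v ∈ N := by
  classical
  have norm_mem : ρ.norm v ∈ N :=
    wordSpan_le_comap_norm op_one op_mul op_comm equivariant hv₀ base step Finset.univ
      (by rwa [Finset.coe_univ])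
  have norm_eq : ρ.norm v = (Fintype.card (Equiv.Perm ι) : K) • v := by
    simp only [Representation.norm, LinearMap.sum_apply, hv _, Finset.sum_const, Finset.card_univ,
      Nat.cast_smul_eq_nsmul]
  rw [norm_eq] at norm_mem
  exact (N.smul_mem_iff (Nat.cast_ne_zero.2 Fintype.card_ne_zero)).1 norm_mem

end Symmetrization

/-- The Grassmann algebra of the `R`-module `M` with coefficients extended to `A`: the free
supercommutative `A`-algebra on odd variables depending linearly on `v : M`. -/
abbrev GrassmannAlgebra (R A M : Type*) [CommRing R] [CommRing A] [Algebra R A] [AddCommGroup M]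
    [Module R M] : Type _ :=
  A ⊗[R] ExteriorAlgebra R M

namespace GrassmannAlgebra

variable {R A M : Type*} [CommRing R] [CommRing A] [Algebra R A] [AddCommGroup M] [Module R M]

variable (A) in
/-- The odd variable `θ_v` attached to a vector `v`. -/
noncomputable def oddVar (v : M) : GrassmannAlgebra R A M := 1 ⊗ₜ ExteriorAlgebra.ι R v

variable (A) in
/-- The `A`-linear contraction by a linear form `d`, i.e. the odd derivative `θ_v ↦ d v`. -/
noncomputable def contract (d : Module.Dual R M) :
    GrassmannAlgebra R A M →ₗ[A] GrassmannAlgebra R A M :=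
  (CliffordAlgebra.contractLeft (Q := (0 : QuadraticForm R M)) d).baseChange A

variable (R A M) in
/-- The parity involution: the algebra automorphism negating every odd variable. -/
noncomputable def parity : GrassmannAlgebra R A M →ₐ[A] GrassmannAlgebra R A M :=
  Algebra.TensorProduct.map (AlgHom.id A A)
    (CliffordAlgebra.involute (Q := (0 : QuadraticForm R M)))

variable (R A M) in
/-- The body map, setting every odd variable to zero. -/
noncomputable def body : GrassmannAlgebra R A M →ₐ[A] A :=
  Algebra.TensorProduct.lift (AlgHom.id A A)
    ((Algebra.ofId R A).comp ExteriorAlgebra.algebraMapInv) fun _ _ => Commute.all _ _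

theorem oddVar_mul_tmul (v : M) (a : A) (e : ExteriorAlgebra R M) :
    oddVar A v * a ⊗ₜ e = a ⊗ₜ (ExteriorAlgebra.ι R v * e) := by
  rw [oddVar, Algebra.TensorProduct.tmul_mul_tmul, one_mul]

@[elab_as_elim]
theorem induction {p : GrassmannAlgebra R A M → Prop} (one : p 1)
    (oddVar_mul : ∀ v b, p b → p (oddVar A v * b)) (smul : ∀ (a : A) b, p b → p (a • b))
    (add : ∀ b c, p b → p c → p (b + c)) (b : GrassmannAlgebra R A M) : p b := by
  have one_tmul (e : ExteriorAlgebra R M) : p (1 ⊗ₜ e) := by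
    induction e using CliffordAlgebra.left_induction (Q := (0 : QuadraticForm R M)) with
    | algebraMap r =>
      rw [← Algebra.TensorProduct.algebraMap_apply', Algebra.algebraMap_eq_smul_one,
        ← algebraMap_smul A]
      exact smul _ _ one
    | add e₁ e₂ h₁ h₂ => exact (congrArg p (TensorProduct.tmul_add _ _ _)).mpr (add _ _ h₁ h₂)
    | ι_mul e v h => exact oddVar_mul_tmul v (1 : A) e ▸ oddVar_mul v _ h
  induction b using TensorProduct.induction_on with
  | zero => exact zero_smul A (1 : GrassmannAlgebra R A M) ▸ smul 0 _ one
  | add b c hb hc => exact add b c hb hc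
  | tmul a e =>
    rw [← mul_one a, ← smul_eq_mul, ← TensorProduct.smul_tmul']
    exact smul a _ (one_tmul e)

theorem contract_one (d : Module.Dual R M) : contract A d 1 = 0 := by
  rw [contract, Algebra.TensorProduct.one_def, LinearMap.baseChange_tmul,
    CliffordAlgebra.contractLeft_one, TensorProduct.tmul_zero]

theorem contract_oddVar_mul (d : Module.Dual R M) (v : M) (b : GrassmannAlgebra R A M) :
    contract A d (oddVar A v * b) = d v • b - oddVar A v * contract A d b := by
  induction b using TensorProduct.induction_on with
  | zero => simp only [mul_zero, map_zero, smul_zero, sub_zero]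
  | add b c hb hc => rw [mul_add, map_add, hb, hc, map_add, mul_add, smul_add]; abel
  | tmul a e =>
    rw [oddVar_mul_tmul, contract, LinearMap.baseChange_tmul, LinearMap.baseChange_tmul,
      oddVar_mul_tmul, ← TensorProduct.tmul_smul, ← TensorProduct.tmul_sub]
    exact congrArg _ (CliffordAlgebra.contractLeft_ι_mul ..)

theorem contract_prod_oddVar (d : Module.Dual R M) (l : List M) (hl : ∀ v ∈ l, d v = 0) :
    contract A d (l.map (oddVar A)).prod = 0 := by
  induction l with
  | nil => exact contract_one d
  | cons v l ih =>
    rw [List.forall_mem_cons] at hl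
    rw [List.map_cons, List.prod_cons, contract_oddVar_mul, hl.1, ih hl.2, mul_zero, zero_smul,
      sub_zero]

variable (R A) in
theorem prod_oddVar_eq_one_tmul_ιMulti {n : ℕ} (v : Fin n → M) :
    ((List.ofFn v).map (oddVar (R := R) A)).prod = 1 ⊗ₜ ExteriorAlgebra.ιMulti R n v := by
  rw [ExteriorAlgebra.ιMulti_apply, ← Algebra.TensorProduct.includeRight_apply, map_list_prod,
    List.map_ofFn, List.map_ofFn]
  rfl

theorem contract_contract (d : Module.Dual R M) (b : GrassmannAlgebra R A M) :
    contract A d (contract A d b) = 0 := by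
  induction b using TensorProduct.induction_on with
  | zero => simp only [map_zero]
  | add b c hb hc => simp only [map_add, hb, hc, add_zero]
  | tmul a e =>
    rw [contract, LinearMap.baseChange_tmul, LinearMap.baseChange_tmul,
      CliffordAlgebra.contractLeft_contractLeft, TensorProduct.tmul_zero]

theorem contract_comm (d d' : Module.Dual R M) (b : GrassmannAlgebra R A M) :
    contract A d (contract A d' b) = -contract A d' (contract A d b) := by
  induction b using TensorProduct.induction_on with
  | zero => simp only [map_zero, neg_zero]
  | add b c hb hc => simp only [map_add, hb, hc, neg_add]
  | tmul a e =>
    simp only [contract, LinearMap.baseChange_tmul]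
    rw [CliffordAlgebra.contractLeft_comm, TensorProduct.tmul_neg]

theorem parity_oddVar (v : M) : parity R A M (oddVar A v) = -oddVar A v := by
  rw [parity, oddVar, Algebra.TensorProduct.map_tmul, map_one, ← TensorProduct.tmul_neg]
  exact congrArg _ (CliffordAlgebra.involute_ι v)

theorem parity_parity (b : GrassmannAlgebra R A M) : parity R A M (parity R A M b) = b := by
  induction b using TensorProduct.induction_on with
  | zero => simp only [map_zero]
  | add b c hb hc => simp only [map_add, hb, hc]
  | tmul a e =>
    simp only [parity, Algebra.TensorProduct.map_tmul, AlgHom.id_apply,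
      CliffordAlgebra.involute_involute]

theorem oddVar_mul_oddVar_comm (v w : M) :
    oddVar (R := R) A v * oddVar A w = -(oddVar A w * oddVar A v) := by
  rw [oddVar, oddVar, Algebra.TensorProduct.tmul_mul_tmul, Algebra.TensorProduct.tmul_mul_tmul,
    one_mul, ← TensorProduct.tmul_neg,
    eq_neg_of_add_eq_zero_left (ExteriorAlgebra.ι_add_mul_swap v w)]

theorem mul_oddVar (b : GrassmannAlgebra R A M) (v : M) :
    b * oddVar A v = oddVar A v * parity R A M b := by
  induction b using induction with
  | one => rw [one_mul, map_one, mul_one]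
  | oddVar_mul w b h =>
    rw [mul_assoc, h, map_mul, parity_oddVar, ← mul_assoc, ← mul_assoc, mul_neg,
      oddVar_mul_oddVar_comm]
  | smul a b h => rw [smul_mul_assoc, h, map_smul, mul_smul_comm]
  | add b c hb hc => rw [add_mul, hb, hc, map_add, mul_add]

theorem mul_oddVar_eq_zero {z : GrassmannAlgebra R A M} {v : M} (h : oddVar A v * z = 0) :
    z * oddVar A v = 0 := by
  rw [mul_oddVar, ← neg_neg (oddVar A v), ← parity_oddVar, neg_mul, ← map_mul, h, map_zero,
    neg_zero]

theorem contract_mul (d : Module.Dual R M) (b c : GrassmannAlgebra R A M) :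
    contract A d (b * c) = contract A d b * c + parity R A M b * contract A d c := by
  induction b using induction with
  | one => rw [one_mul, map_one (parity R A M), one_mul, contract_one, zero_mul, zero_add]
  | oddVar_mul w b h =>
    rw [mul_assoc, contract_oddVar_mul, h, contract_oddVar_mul, map_mul, parity_oddVar, sub_mul,
      mul_add, smul_mul_assoc, neg_mul, neg_mul, ← mul_assoc, ← mul_assoc]
    abel
  | smul a b h => simp only [smul_mul_assoc, h, map_smul, smul_add]
  | add b₁ b₂ h₁ h₂ => rw [add_mul, map_add, h₁, h₂, map_add, map_add, add_mul, add_mul]; abel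

theorem body_oddVar (v : M) : body R A M (oddVar A v) = 0 := by
  simp [body, oddVar, ExteriorAlgebra.algebraMapInv]

theorem mul_eq_body_smul {z : GrassmannAlgebra R A M} (hz : ∀ v, z * oddVar A v = 0)
    (b : GrassmannAlgebra R A M) : z * b = body R A M b • z := by
  induction b using induction with
  | one => rw [mul_one, map_one, one_smul]
  | oddVar_mul v b _ => rw [← mul_assoc, hz, zero_mul, map_mul, body_oddVar, zero_mul, zero_smul]
  | smul a b h => rw [mul_smul_comm, h, map_smul, smul_assoc]
  | add b c hb hc => rw [mul_add, hb, hc, map_add, add_smul]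

section map

variable {A' M' : Type*} [CommRing A'] [Algebra R A'] [AddCommGroup M'] [Module R M']

/-- The homomorphism of Grassmann algebras that is `f` on coefficients and `g` on odd variables. -/
noncomputable def map (f : A →ₐ[R] A') (g : M →ₗ[R] M') :
    GrassmannAlgebra R A M →ₐ[R] GrassmannAlgebra R A' M' :=
  Algebra.TensorProduct.map f (ExteriorAlgebra.map g)

variable (f : A →ₐ[R] A') (g : M →ₗ[R] M')

theorem map_includeLeft (a : A) :
    map f g (Algebra.TensorProduct.includeLeft (S := R) a) =
      Algebra.TensorProduct.includeLeft (S := R) (f a) := by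
  simp [map]

theorem map_smul_eq (a : A) (b : GrassmannAlgebra R A M) : map f g (a • b) = f a • map f g b := by
  rw [Algebra.smul_def, Algebra.smul_def, map_mul]
  exact congrArg (· * map f g b) (map_includeLeft f g a)

theorem map_oddVar (v : M) : map f g (oddVar A v) = oddVar A' (g v) := by
  rw [map, oddVar, Algebra.TensorProduct.map_tmul, map_one, ExteriorAlgebra.map_apply_ι, oddVar]

theorem contract_map (d : Module.Dual R M') (b : GrassmannAlgebra R A M) :
    contract A' d (map f g b) = map f g (contract A (d ∘ₗ g) b) := by
  induction b using induction with
  | one => rw [map_one, contract_one, contract_one, map_zero]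
  | oddVar_mul v b h =>
    rw [map_mul, map_oddVar, contract_oddVar_mul, contract_oddVar_mul, h, map_sub, map_mul,
      map_oddVar, LinearMap.comp_apply, map_smul]
  | smul a b h => rw [map_smul_eq, map_smul, map_smul, map_smul_eq, h]
  | add b c hb hc => simp only [map_add, hb, hc]

theorem parity_map (b : GrassmannAlgebra R A M) :
    parity R A' M' (map f g b) = map f g (parity R A M b) := by
  induction b using induction with
  | one => simp only [map_one]
  | oddVar_mul v b h => simp only [map_mul, map_oddVar, parity_oddVar, map_neg, h]
  | smul a b h => rw [map_smul_eq, map_smul, map_smul, map_smul_eq, h]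
  | add b c hb hc => simp only [map_add, hb, hc]

theorem body_map (b : GrassmannAlgebra R A M) : body R A' M' (map f g b) = f (body R A M b) := by
  induction b using induction with
  | one => simp only [map_one]
  | oddVar_mul v b _ => simp only [map_mul, map_oddVar, body_oddVar, zero_mul, map_zero]
  | smul a b h => rw [map_smul_eq, map_smul, map_smul, h, smul_eq_mul, smul_eq_mul, map_mul]
  | add b c hb hc => simp only [map_add, hb, hc]

end map

variable (R A M) in
/-- The `A`-linear odd derivations, i.e. the maps satisfying the Leibniz rule twisted by the
parity involution. -/
noncomputable def oddDerivations : Submodule A (Module.End A (GrassmannAlgebra R A M)) where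
  carrier := {D | ∀ b c, D (b * c) = D b * c + parity R A M b * D c}
  add_mem' {D D'} hD hD' b c := by
    simp only [LinearMap.add_apply, hD b c, hD' b c, add_mul, mul_add]; abel
  zero_mem' b c := by simp only [LinearMap.zero_apply, zero_mul, mul_zero, add_zero]
  smul_mem' a D hD b c := by
    simp only [LinearMap.smul_apply, hD b c, smul_add, smul_mul_assoc, mul_smul_comm]

theorem contract_mem_oddDerivations (d : Module.Dual R M) :
    contract A d ∈ oddDerivations R A M :=
  contract_mul d

section oddDerivations

variable {D : Module.End A (GrassmannAlgebra R A M)} {S : Set (GrassmannAlgebra R A M)}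
  {I J : Ideal (GrassmannAlgebra R A M)}

theorem oddDerivation_one (hD : D ∈ oddDerivations R A M) : D 1 = 0 := by
  simpa only [mul_one, one_mul, map_one (parity R A M), left_eq_add] using hD 1 1

theorem oddDerivation_includeLeft (hD : D ∈ oddDerivations R A M) (a : A) :
    D (Algebra.TensorProduct.includeLeft (S := R) a) = 0 :=
  calc
    D (Algebra.TensorProduct.includeLeft (S := R) a) = D (a • 1) :=
      congrArg D (Algebra.algebraMap_eq_smul_one a)
    _ = 0 := by rw [map_smul, oddDerivation_one hD, smul_zero]

theorem oddDerivation_mem_span (hD : D ∈ oddDerivations R A M) (hS : ∀ s ∈ S, D s ∈ Ideal.span S)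
    {x : GrassmannAlgebra R A M} (hx : x ∈ Ideal.span S) : D x ∈ Ideal.span S := by
  induction hx using Submodule.span_induction with
  | mem s hs => exact hS s hs
  | zero => exact (map_zero D).symm ▸ zero_mem _
  | add x y _ _ hx hy => exact (map_add D x y).symm ▸ add_mem hx hy
  | smul b x hx h =>
    rw [smul_eq_mul, hD b x]
    exact add_mem (Ideal.mul_mem_left _ _ hx) (Ideal.mul_mem_left _ _ h)

theorem parity_mem_span (hS : ∀ s ∈ S, parity R A M s ∈ S)
    {x : GrassmannAlgebra R A M} (hx : x ∈ Ideal.span S) : parity R A M x ∈ Ideal.span S := by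
  suffices Ideal.span S ≤ (Ideal.span S).comap (parity R A M) from this hx
  exact Ideal.span_le.2 fun s hs => Ideal.subset_span (hS s hs)

theorem isTwoSided_of_parity_mem (hI : ∀ x ∈ I, parity R A M x ∈ I) : I.IsTwoSided where
  mul_mem_of_left {x} b hx := by
    induction b using induction generalizing x with
    | one => rwa [mul_one]
    | oddVar_mul v b h =>
      rw [← mul_assoc, mul_oddVar]
      exact h (I.mul_mem_left _ (hI x hx))
    | smul a b h =>
      rw [mul_smul_comm, Algebra.smul_def]
      exact I.mul_mem_left _ (h hx)
    | add b c hb hc => exact mul_add x b c ▸ I.add_mem (hb hx) (hc hx)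

theorem parity_mem_mul (hI : ∀ x ∈ I, parity R A M x ∈ I) (hJ : ∀ x ∈ J, parity R A M x ∈ J)
    {x : GrassmannAlgebra R A M} (hx : x ∈ I * J) : parity R A M x ∈ I * J := by
  refine Submodule.smul_induction_on hx (fun b hb c hc => ?_) fun x y hx hy => ?_
  · rw [smul_eq_mul, map_mul]
    exact Ideal.mul_mem_mul (hI b hb) (hJ c hc)
  · exact (map_add (parity R A M) x y).symm ▸ add_mem hx hy

theorem oddDerivation_mem_mul (hD : D ∈ oddDerivations R A M) (hI : ∀ x ∈ I, parity R A M x ∈ I)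
    (hDI : ∀ x ∈ I, D x ∈ I) (hDJ : ∀ x ∈ J, D x ∈ J) {x : GrassmannAlgebra R A M}
    (hx : x ∈ I * J) : D x ∈ I * J := by
  refine Submodule.smul_induction_on hx (fun b hb c hc => ?_) fun x y hx hy => ?_
  · rw [smul_eq_mul, hD b c]
    exact add_mem (Ideal.mul_mem_mul (hDI b hb) hc) (Ideal.mul_mem_mul (hI b hb) (hDJ c hc))
  · exact (map_add D x y).symm ▸ add_mem hx hy

end oddDerivations
end GrassmannAlgebra

theorem pow_succ_eq_mul_pow_of_mul_self_le {M : Type*} [Monoid M] [PartialOrder M] [MulLeftMono M]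
    [MulRightMono M] {a b : M} (mul_self_le : a * a ≤ a * b) (le : b ≤ a) (k : ℕ) :
    a ^ (k + 1) = a * b ^ k := by
  refine le_antisymm ?_ (pow_succ' a k ▸ mul_le_mul_right (pow_le_pow_left' le k) a)
  induction k with
  | zero => simp
  | succ k ih =>
    calc
      a ^ (k + 1 + 1) = a * a ^ (k + 1) := pow_succ' a (k + 1)
      _ ≤ a * (a * b ^ k) := by gcongr
      _ = a * a * b ^ k := (mul_assoc a a _).symm
      _ ≤ a * b * b ^ k := by gcongr
      _ = a * b ^ (k + 1) := by rw [mul_assoc, ← pow_succ']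

namespace SP

open GrassmannAlgebra

variable {n : ℕ}

/-- Evaluation `p ↦ p(xᵢ, yᵢ)` of a polynomial in one pair of variables at the site `i`. -/
noncomputable def atSite (i : Fin n) : PP 1 →ₐ[ℂ] PP n :=
  rename (Sum.map (fun _ => i) fun _ => i)

/-- The odd derivative `∂/∂θᵢ`. -/
noncomputable def thetaDeriv (i : Fin n) : Module.End (PP n) (SP n) :=
  contract (PP n) (LinearMap.proj i : (Fin n → ℂ) →ₗ[ℂ] ℂ)

/-- The one-site operators at `i`: multiplication by `p(xᵢ, yᵢ)` for `Sum.inl p`, and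
`p(xᵢ, yᵢ) ∂/∂θᵢ` for `Sum.inr p`. -/
noncomputable def siteOp : PP 1 ⊕ PP 1 → Fin n → Module.End (PP n) (SP n)
  | .inl p, i => atSite i p • 1
  | .inr p, i => atSite i p • thetaDeriv i

/-- The polarized odd derivative `∑ᵢ p(xᵢ, yᵢ) ∂/∂θᵢ`. -/
noncomputable def polarDeriv (p : PP 1) : Module.End (PP n) (SP n) :=
  ∑ i, atSite i p • thetaDeriv i

variable (n) in
/-- The top form `θ₁ ⋯ θ_n`. -/
noncomputable def thetaTop : SP n :=
  1 ⊗ₜ ExteriorAlgebra.ιMulti ℂ n fun i => Pi.single i (1 : ℂ)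

theorem rename_atSite (σ : Equiv.Perm (Fin n)) (i : Fin n) (p : PP 1) :
    rename (Sum.map σ σ) (atSite i p) = atSite (σ i) p := by
  rw [atSite, rename_rename, Sum.map_comp_map]
  rfl

theorem siteOp_zero (i : Fin n) : siteOp (.inl 0) i = 0 := by
  rw [siteOp, map_zero, zero_smul]

theorem exists_siteOp_eq_one : ∃ c, ∀ i : Fin n, siteOp c i = 1 :=
  ⟨.inl 1, fun i => by rw [siteOp, map_one, one_smul]⟩

theorem thetaDeriv_mul_self (i : Fin n) : thetaDeriv i * thetaDeriv i = 0 :=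
  LinearMap.ext fun x => contract_contract _ x

theorem thetaDeriv_mul_comm (i j : Fin n) :
    thetaDeriv i * thetaDeriv j = -(thetaDeriv j * thetaDeriv i) :=
  LinearMap.ext fun x => contract_comm _ _ x

theorem exists_siteOp_mul (c d : PP 1 ⊕ PP 1) :
    ∃ e, ∀ i : Fin n, siteOp c i * siteOp d i = siteOp e i := by
  rcases c with p | p <;> rcases d with q | q
  · exact ⟨.inl (p * q), fun i => by
      simp only [siteOp, smul_mul_smul_comm, map_mul, one_mul]⟩
  · exact ⟨.inr (p * q), fun i => by
      simp only [siteOp, smul_mul_smul_comm, map_mul, one_mul]⟩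
  · exact ⟨.inr (p * q), fun i => by
      simp only [siteOp, smul_mul_smul_comm, map_mul, mul_one]⟩
  · exact ⟨.inl 0, fun i => by
      rw [siteOp_zero, siteOp, siteOp, smul_mul_smul_comm, thetaDeriv_mul_self, smul_zero]⟩

theorem siteOp_comm (c d : PP 1 ⊕ PP 1) (i j : Fin n) :
    siteOp c i * siteOp d j = siteOp d j * siteOp c i ∨
      siteOp c i * siteOp d j = -(siteOp d j * siteOp c i) := by
  rcases c with p | p <;> rcases d with q | q
  · left
    simp only [siteOp, smul_mul_smul_comm, mul_comm (atSite i p)]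
  · left
    simp only [siteOp, smul_mul_smul_comm, mul_comm (atSite i p), one_mul, mul_one]
  · left
    simp only [siteOp, smul_mul_smul_comm, mul_comm (atSite i p), one_mul, mul_one]
  · right
    simp only [siteOp, smul_mul_smul_comm, mul_comm (atSite i p), thetaDeriv_mul_comm i j]
    exact smul_neg (atSite j q * atSite i p) (thetaDeriv j * thetaDeriv i)

theorem diagAct_eq_map (σ : Equiv.Perm (Fin n)) :
    diagAct σ = GrassmannAlgebra.map (rename (Sum.map σ σ)) (LinearMap.funLeft ℂ ℂ ⇑σ⁻¹) := rfl

theorem diagAct_smul (σ : Equiv.Perm (Fin n)) (p : PP n) (x : SP n) :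
    diagAct σ (p • x) = rename (Sum.map σ σ) p • diagAct σ x :=
  map_smul_eq (rename (Sum.map σ σ)) (LinearMap.funLeft ℂ ℂ ⇑σ⁻¹) p x

theorem diagAct_thetaDeriv (σ : Equiv.Perm (Fin n)) (i : Fin n) (x : SP n) :
    diagAct σ (thetaDeriv i x) = thetaDeriv (σ i) (diagAct σ x) := by
  have proj_comp : (LinearMap.proj (σ i) : (Fin n → ℂ) →ₗ[ℂ] ℂ) ∘ₗ LinearMap.funLeft ℂ ℂ ⇑σ⁻¹ =
      LinearMap.proj i :=
    LinearMap.ext fun v => congrArg v (σ.symm_apply_apply i)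
  rw [thetaDeriv, thetaDeriv, diagAct_eq_map, contract_map, proj_comp]

theorem diagAct_siteOp (σ : Equiv.Perm (Fin n)) (c : PP 1 ⊕ PP 1) (i : Fin n) (x : SP n) :
    diagAct σ (siteOp c i x) = siteOp c (σ i) (diagAct σ x) := by
  rcases c with p | p
  · simp only [siteOp, LinearMap.smul_apply, Module.End.one_apply, diagAct_smul, rename_atSite]
  · simp only [siteOp, LinearMap.smul_apply, diagAct_smul, diagAct_thetaDeriv, rename_atSite]

theorem diagAct_one (x : SP n) : diagAct 1 x = x := by
  have : (diagAct 1 : SP n →ₐ[ℂ] SP n) = AlgHom.id ℂ (SP n) := by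
    refine Algebra.TensorProduct.ext (MvPolynomial.algHom_ext fun s => ?_)
      (ExteriorAlgebra.hom_ext (LinearMap.ext fun v => ?_))
    · simp [diagAct]
    · simp [diagAct, LinearMap.funLeft]
  rw [this, AlgHom.id_apply]

theorem diagAct_mul (σ τ : Equiv.Perm (Fin n)) (x : SP n) :
    diagAct (σ * τ) x = diagAct σ (diagAct τ x) := by
  have : (diagAct (σ * τ) : SP n →ₐ[ℂ] SP n) = (diagAct σ).comp (diagAct τ) := by
    refine Algebra.TensorProduct.ext (MvPolynomial.algHom_ext fun s => ?_)
      (ExteriorAlgebra.hom_ext (LinearMap.ext fun v => ?_))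
    · simp [diagAct, Sum.map_map]
    · simp [diagAct, LinearMap.funLeft_comp]
  rw [this, AlgHom.comp_apply]

variable (n) in
/-- The diagonal action twisted by the sign, whose invariants are the antisymmetric elements. -/
noncomputable def signedRep : Representation ℂ (Equiv.Perm (Fin n)) (SP n) where
  toFun σ := ((Equiv.Perm.sign σ : ℤ) : ℂ) • (diagAct σ).toLinearMap
  map_one' := LinearMap.ext fun x => by simp [diagAct_one]
  map_mul' σ τ := LinearMap.ext fun x => by
    simp [diagAct_mul, smul_smul, mul_comm]

theorem signedRep_apply (σ : Equiv.Perm (Fin n)) (x : SP n) :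
    signedRep n σ x = ((Equiv.Perm.sign σ : ℤ) : ℂ) • diagAct σ x := rfl

theorem mem_invariants_signedRep {x : SP n} : x ∈ (signedRep n).invariants ↔ IsAntisym x := by
  have sign_mul_self (σ : Equiv.Perm (Fin n)) :
      ((Equiv.Perm.sign σ : ℤ) : ℂ) * ((Equiv.Perm.sign σ : ℤ) : ℂ) = 1 := by
    exact_mod_cast Int.units_coe_mul_self _
  refine forall_congr' fun σ => ⟨fun h => ?_, fun h => ?_⟩
  · rw [← h, signedRep_apply, smul_smul, sign_mul_self, one_smul, ← signedRep_apply, h]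
  · rw [signedRep_apply, h, smul_smul, sign_mul_self, one_smul]

theorem signedRep_siteOp (σ : Equiv.Perm (Fin n)) (c : PP 1 ⊕ PP 1) (i : Fin n) (x : SP n) :
    signedRep n σ (siteOp c i x) = siteOp c (σ i) (signedRep n σ x) := by
  rw [signedRep_apply, signedRep_apply, diagAct_siteOp, ← LinearMap.map_smul_of_tower]

theorem isAntisym_thetaTop : IsAntisym (thetaTop n) := by
  intro σ
  have permuted : LinearMap.funLeft ℂ ℂ ⇑σ⁻¹ ∘ (fun i => (Pi.single i 1 : Fin n → ℂ)) =
      (fun i => (Pi.single i 1 : Fin n → ℂ)) ∘ σ := by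
    ext i j
    simp [Pi.single_apply, LinearMap.funLeft_apply, Equiv.symm_apply_eq]
  rw [diagAct, thetaTop, Algebra.TensorProduct.map_tmul, map_one, ExteriorAlgebra.map_apply_ιMulti,
    permuted, AlternatingMap.map_perm, ← TensorProduct.tmul_smul, Int.cast_smul_eq_zsmul]
  rfl

theorem oddVar_mul_thetaTop (v : Fin n → ℂ) : oddVar (PP n) v * thetaTop n = 0 := by
  have dependent : ¬LinearIndependent ℂ
      (Matrix.vecCons v fun i => (Pi.single i 1 : Fin n → ℂ)) := fun h => by
    simpa using h.fintype_card_le_finrank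
  have wedge_eq_zero := AlternatingMap.map_linearDependent (ExteriorAlgebra.ιMulti ℂ (n + 1)) _
    dependent
  rw [ExteriorAlgebra.ιMulti_succ_apply, Matrix.cons_val_zero, Matrix.tail_cons] at wedge_eq_zero
  rw [thetaTop, oddVar_mul_tmul, wedge_eq_zero, TensorProduct.tmul_zero]

theorem thetaTop_mul (g : SP n) :
    thetaTop n * g = thetaTop n * (body ℂ (PP n) (Fin n → ℂ) g ⊗ₜ 1) := by
  rw [mul_eq_body_smul fun v => mul_oddVar_eq_zero (oddVar_mul_thetaTop v), Algebra.smul_def]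
  exact Algebra.commutes _ _

variable (n) in
/-- The span of all words in the one-site operators applied to the top form. -/
noncomputable def siteSpan : Submodule ℂ (SP n) :=
  wordSpan (fun c i => (siteOp c i).restrictScalars ℂ) (thetaTop n) Set.univ

theorem thetaTop_mem_siteSpan : thetaTop n ∈ siteSpan n := base_mem_wordSpan

theorem siteOp_mem_siteSpan (c : PP 1 ⊕ PP 1) (i : Fin n) {x : SP n} (hx : x ∈ siteSpan n) :
    siteOp c i x ∈ siteSpan n :=
  op_mem_wordSpan (op := fun c i => (siteOp c i).restrictScalars ℂ) c (Set.mem_univ i) hx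

theorem thetaDeriv_mem_siteSpan (i : Fin n) {x : SP n} (hx : x ∈ siteSpan n) :
    thetaDeriv i x ∈ siteSpan n := by
  simpa only [siteOp, map_one, one_smul] using siteOp_mem_siteSpan (.inr 1) i hx

theorem smul_mem_siteSpan (p : PP n) {x : SP n} (hx : x ∈ siteSpan n) : p • x ∈ siteSpan n := by
  induction p using MvPolynomial.induction_on generalizing x with
  | C a => rw [← algebraMap_eq, algebraMap_smul]; exact Submodule.smul_mem _ a hx
  | add p q hp hq => rw [add_smul]; exact add_mem (hp hx) (hq hx)
  | mul_X p s hp =>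
    obtain ⟨c, i, hc⟩ : ∃ c i, atSite i c = (X s : PP n) := by
      rcases s with i | i
      · exact ⟨X (.inl 0), i, rename_X _ _⟩
      · exact ⟨X (.inr 0), i, rename_X _ _⟩
    rw [mul_smul, ← hc]
    exact hp (siteOp_mem_siteSpan (.inl c) i hx)

theorem oddVar_mul_mem_siteSpan (v : Fin n → ℂ) {x : SP n} (hx : x ∈ siteSpan n) :
    oddVar (PP n) v * x ∈ siteSpan n := by
  suffices siteSpan n ≤ siteSpan n ⊓ (siteSpan n).comap (LinearMap.mulLeft ℂ (oddVar (PP n) v)) from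
    (this hx).2
  refine wordSpan_le ⟨thetaTop_mem_siteSpan, ?_⟩ ?_
  · rw [SetLike.mem_coe, Submodule.mem_comap, LinearMap.mulLeft_apply, oddVar_mul_thetaTop]
    exact zero_mem _
  rintro c i - x ⟨hx, hvx⟩
  rw [SetLike.mem_coe, Submodule.mem_comap, LinearMap.mulLeft_apply] at hvx
  refine ⟨siteOp_mem_siteSpan c i hx, ?_⟩
  rw [SetLike.mem_coe, Submodule.mem_comap, LinearMap.mulLeft_apply,
    LinearMap.restrictScalars_apply]
  rcases c with p | p
  · rw [siteOp, LinearMap.smul_apply, Module.End.one_apply, mul_smul_comm]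
    exact smul_mem_siteSpan _ hvx
  · have anticomm :
        oddVar (PP n) v * thetaDeriv i x = v i • x - thetaDeriv i (oddVar (PP n) v * x) :=
      eq_sub_of_add_eq' (sub_eq_iff_eq_add.1 (contract_oddVar_mul _ v x).symm).symm
    rw [siteOp, LinearMap.smul_apply, mul_smul_comm, anticomm]
    exact smul_mem_siteSpan _ (sub_mem (Submodule.smul_mem _ _ hx) (thetaDeriv_mem_siteSpan i hvx))

theorem one_mem_of_prod_oddVar_mem_siteSpan (l : List (Fin n)) (hl : l.Nodup)
    (h : ((l.map fun i => Pi.single i (1 : ℂ)).map (oddVar (PP n))).prod ∈ siteSpan n) :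
    (1 : SP n) ∈ siteSpan n := by
  induction l with
  | nil => exact h
  | cons i l ih =>
    rw [List.nodup_cons] at hl
    refine ih hl.2 ?_
    have deriv_tail := contract_prod_oddVar (A := PP n) (LinearMap.proj i)
      (l.map fun j => (Pi.single j 1 : Fin n → ℂ)) (by
        rw [List.forall_mem_map]
        exact fun j hj => Pi.single_eq_of_ne (by rintro rfl; exact hl.1 hj) _)
    have deriv_mem := thetaDeriv_mem_siteSpan i h
    rwa [List.map_cons, List.map_cons, List.prod_cons, thetaDeriv, contract_oddVar_mul, deriv_tail,
      mul_zero, sub_zero, LinearMap.proj_apply, Pi.single_eq_same, one_smul] at deriv_mem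

theorem one_mem_siteSpan : (1 : SP n) ∈ siteSpan n := by
  refine one_mem_of_prod_oddVar_mem_siteSpan _ (List.nodup_finRange n) ?_
  rw [← List.ofFn_eq_map, prod_oddVar_eq_one_tmul_ιMulti]
  exact thetaTop_mem_siteSpan

theorem siteSpan_eq_top : siteSpan n = ⊤ := by
  refine eq_top_iff.2 fun x _ => ?_
  induction x using GrassmannAlgebra.induction with
  | one => exact one_mem_siteSpan
  | oddVar_mul v b h => exact oddVar_mul_mem_siteSpan v (h trivial)
  | smul p b h => exact smul_mem_siteSpan p (h trivial)
  | add b c hb hc => exact add_mem (hb trivial) (hc trivial)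

theorem mem_of_isAntisym {N : Ideal (SP n)} (thetaTop_mem : thetaTop n ∈ N)
    (polarDeriv_mem : ∀ p, ∀ x ∈ N, polarDeriv p x ∈ N) {f : SP n} (hf : IsAntisym f) : f ∈ N := by
  refine mem_of_mem_invariants_of_mem_wordSpan (N := N.restrictScalars ℂ) (v₀ := thetaTop n)
    (op := fun c i => (siteOp c i).restrictScalars ℂ)
    ?_ ?_ ?_ signedRep_siteOp (mem_invariants_signedRep.2 isAntisym_thetaTop) thetaTop_mem ?_
    (mem_invariants_signedRep.2 hf) (by rw [← siteSpan, siteSpan_eq_top]; trivial)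
  · exact exists_siteOp_eq_one.imp fun c hc i => by rw [hc]; rfl
  · exact fun c d => (exists_siteOp_mul c d).imp fun e he i => by rw [← he]; rfl
  · exact fun c d i j _ => (siteOp_comm c d i j).imp (congrArg (LinearMap.restrictScalars ℂ))
      (congrArg (LinearMap.restrictScalars ℂ))
  · rintro (p | p) x hx
    · simp only [siteOp, LinearMap.restrictScalars_apply, LinearMap.smul_apply,
        Module.End.one_apply, ← Finset.sum_smul]
      exact Submodule.smul_of_tower_mem N _ hx
    · simpa [polarDeriv, siteOp] using polarDeriv_mem p x hx

theorem isAntisym_polarDeriv (p : PP 1) {f : SP n} (hf : IsAntisym f) :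
    IsAntisym (polarDeriv p f) := fun σ => by
  simp only [polarDeriv, LinearMap.sum_apply, LinearMap.smul_apply, map_sum, diagAct_smul,
    diagAct_thetaDeriv, rename_atSite, hf σ, LinearMap.map_smul_of_tower]
  rw [Equiv.sum_comp σ fun i => atSite i p • ((Equiv.Perm.sign σ : ℤ) : ℂ) • thetaDeriv i f,
    Finset.smul_sum]
  exact Finset.sum_congr rfl fun i _ => smul_comm _ _ _

theorem isAntisym_parity {f : SP n} (hf : IsAntisym f) :
    IsAntisym (parity ℂ (PP n) (Fin n → ℂ) f) := fun σ => by
  rw [diagAct_eq_map, ← parity_map, ← diagAct_eq_map, hf]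
  exact LinearMap.map_smul_of_tower (parity ℂ (PP n) (Fin n → ℂ)).toLinearMap _ f

theorem isAntisymP_body {f : SP n} (hf : IsAntisym f) :
    IsAntisymP (body ℂ (PP n) (Fin n → ℂ) f) := fun σ => by
  rw [← body_map _ (LinearMap.funLeft ℂ ℂ ⇑σ⁻¹), ← diagAct_eq_map, hf]
  exact LinearMap.map_smul_of_tower (body ℂ (PP n) (Fin n → ℂ)).toLinearMap _ f

variable (n) in
/-- The ideal `𝒥_n` itself, i.e. `superJ` before restriction of scalars to `ℂ`. -/
noncomputable def antisymIdeal : Ideal (SP n) := Ideal.span {g | IsAntisym g}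

variable (n) in
/-- The ideal of `B` generated by `J_n`, i.e. `evenJ` before restriction of scalars to `ℂ`. -/
noncomputable def evenAntisymIdeal : Ideal (SP n) :=
  Ideal.span {g | ∃ p : PP n, IsAntisymP p ∧ g = Algebra.TensorProduct.includeLeft (S := ℂ) p}

theorem polarDeriv_mem_oddDerivations (p : PP 1) :
    polarDeriv p ∈ oddDerivations ℂ (PP n) (Fin n → ℂ) :=
  sum_mem fun i _ => Submodule.smul_mem _ (atSite i p) (contract_mem_oddDerivations _)

theorem polarDeriv_mem_antisymIdeal (p : PP 1) {x : SP n} (hx : x ∈ antisymIdeal n) :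
    polarDeriv p x ∈ antisymIdeal n :=
  oddDerivation_mem_span (S := {g | IsAntisym g}) (polarDeriv_mem_oddDerivations p)
    (fun _ hg => Ideal.subset_span (isAntisym_polarDeriv p hg)) hx

theorem polarDeriv_mem_evenAntisymIdeal (p : PP 1) {x : SP n} (hx : x ∈ evenAntisymIdeal n) :
    polarDeriv p x ∈ evenAntisymIdeal n := by
  refine oddDerivation_mem_span (polarDeriv_mem_oddDerivations p) ?_ hx
  rintro _ ⟨q, -, rfl⟩
  rw [oddDerivation_includeLeft (polarDeriv_mem_oddDerivations p) q]
  exact zero_mem _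

theorem parity_mem_antisymIdeal {x : SP n} (hx : x ∈ antisymIdeal n) :
    parity ℂ (PP n) (Fin n → ℂ) x ∈ antisymIdeal n :=
  parity_mem_span (S := {g | IsAntisym g}) (fun _ => isAntisym_parity) hx

theorem parity_mem_evenAntisymIdeal {x : SP n} (hx : x ∈ evenAntisymIdeal n) :
    parity ℂ (PP n) (Fin n → ℂ) x ∈ evenAntisymIdeal n := by
  refine parity_mem_span ?_ hx
  rintro _ ⟨q, hq, rfl⟩
  exact ⟨q, hq, AlgHom.commutes (parity ℂ (PP n) (Fin n → ℂ)) q⟩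

variable (n) in
/-- The left colon ideal of all `f` that multiply every antisymmetric element into the product
`𝒥_n * J_n`. -/
noncomputable def antisymColon : Ideal (SP n) where
  carrier := {f | ∀ g, IsAntisym g → f * g ∈ antisymIdeal n * evenAntisymIdeal n}
  add_mem' hf hf' g hg := (add_mul _ _ g).symm ▸ add_mem (hf g hg) (hf' g hg)
  zero_mem' g _ := (zero_mul g).symm ▸ zero_mem _
  smul_mem' b f hf g hg := (mul_assoc b f g).symm ▸ Ideal.mul_mem_left _ b (hf g hg)

theorem thetaTop_mem_antisymColon : thetaTop n ∈ antisymColon n := fun g hg => by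
  rw [thetaTop_mul]
  exact Ideal.mul_mem_mul (Ideal.subset_span isAntisym_thetaTop)
    (Ideal.subset_span ⟨_, isAntisymP_body hg, rfl⟩)

theorem polarDeriv_mem_antisymColon (p : PP 1) {f : SP n} (hf : f ∈ antisymColon n) :
    polarDeriv p f ∈ antisymColon n := fun g hg => by
  let par := parity ℂ (PP n) (Fin n → ℂ)
  have leibniz : polarDeriv p f * g = polarDeriv p (f * g) - par (f * par (polarDeriv p g)) := by
    rw [map_mul par, parity_parity, polarDeriv_mem_oddDerivations p f g, add_sub_cancel_right]
  rw [leibniz]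
  refine sub_mem ?_ ?_
  · exact oddDerivation_mem_mul (polarDeriv_mem_oddDerivations p)
      (fun _ => parity_mem_antisymIdeal) (fun _ => polarDeriv_mem_antisymIdeal p)
      (fun _ => polarDeriv_mem_evenAntisymIdeal p) (hf g hg)
  · exact parity_mem_mul (fun _ => parity_mem_antisymIdeal) (fun _ => parity_mem_evenAntisymIdeal)
      (hf _ (isAntisym_parity (isAntisym_polarDeriv p hg)))

theorem antisymIdeal_mul_self_le :
    antisymIdeal n * antisymIdeal n ≤ antisymIdeal n * evenAntisymIdeal n := by
  have : (Ideal.span {g : SP n | IsAntisym g}).IsTwoSided :=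
    isTwoSided_of_parity_mem fun _ => parity_mem_antisymIdeal
  refine (Ideal.span_mul_span _ _).trans_le (Ideal.span_le.2 ?_)
  rintro _ ⟨f, hf, g, hg, rfl⟩
  exact mem_of_isAntisym thetaTop_mem_antisymColon (fun p _ => polarDeriv_mem_antisymColon p) hf
    g hg

theorem superJ_mul_superJ_le : superJ n * superJ n ≤ superJ n * evenJ n :=
  antisymIdeal_mul_self_le

theorem evenJ_le_superJ : evenJ n ≤ superJ n := by
  refine Ideal.span_mono (α := SP n) ?_
  rintro _ ⟨p, hp, rfl⟩ σ
  rw [diagAct_eq_map, map_includeLeft, hp, map_smul]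

end SP

/-- For all `k ≥ 1`, `𝒥_n^k = 𝒥_n · J_n^{k-1}`. -/
theorem superJ_pow (n : ℕ) (k : ℕ) (hk : 1 ≤ k) :
    superJ n ^ k = superJ n * evenJ n ^ (k - 1) := by
  obtain ⟨k, rfl⟩ := Nat.exists_eq_add_of_le' hk
  exact pow_succ_eq_mul_pow_of_mul_self_le SP.superJ_mul_superJ_le SP.evenJ_le_superJ k
end
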